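/- (Weighted dispersive estimate) Let ω > 0, λ_j > 0, γ and φ_{t,x} as above, and η ∈ C^{d+3}(𝕋^d). Then there is a constant C independent of t and x such that |∫_{𝕋^d} e^{iφ_{t,x}(k)} η(k) dk| ≤ C ( ‖η‖_∞ |t|^{−d/2} + sup_{|β| ≤ d+3} ‖∂^β η‖_∞ · (3 + ‖x‖₁)^{d+3} |t|^{−(d+1)/2} ) for all |t| ≥ 1, where ‖x‖₁ = ∑_j |x_j|. -/

import Mathlib

open MeasureTheory Real

/-!
The phase is `k·x - 2tγ(k)`; the plane wave `e^{ik·x}` is absorbed into the amplitude, at the cost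
of a factor `(1 + ‖x‖₁)^n` in its `C^n` size, so only the phase `τγ` with `τ = -2t` is left.

The critical points of `γ` are the points at which every `sin kⱼ` vanishes. A smooth partition of
unity separates their neighbourhoods from the regions where some `|sin kⱼ|`, hence some `|∂ⱼγ|`, is
bounded below; there, repeated integration by parts gives any power of `1/|τ|`.

No Morse lemma is needed near a critical point `p`. The square of the oscillatory integral is an
integral over displacements `y` of integrals with phase `γ(k + y) - γ(k)`. Since `∇γ` is injective
near `p`, with quantitative lower bounds, this phase is nonstationary at scale `‖y‖`, and
`∫ (1 + |τ|‖y‖)^{-(d+1)} dy = O(|τ|^{-d})` yields the decay `|τ|^{-d/2}`. For an amplitude `b`, the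
difference `b - b(p)` is a combination of the `∂ⱼγ`, by integrating `∇b` along an explicit
contraction to `p`; one integration by parts then gains a further `|τ|^{-1}` on this part, and
only `b(p)` meets the leading power of `τ`.
-/

section CnBounded

variable {P Q E F A : Type*} [NormedAddCommGroup E] [NormedSpace ℝ E] [NormedAddCommGroup F]
  [NormedSpace ℝ F] [NormedAddCommGroup A] [NormedSpace ℝ A]

/-- The family `f` is `O(W)` in `C^n`, uniformly in the parameter: each `f p` is `C^n`, and its
derivatives up to order `n` are bounded by one constant times `W p`. Requiring the constant to be
positive makes `W` automatically nonnegative. -/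
def CnBounded (n : ℕ) (f : P → E → A) (W : P → ℝ) : Prop :=
  (∀ p, ContDiff ℝ n (f p)) ∧
    ∃ C > 0, ∀ p, ∀ m ≤ n, ∀ k, ‖iteratedFDeriv ℝ m (f p) k‖ ≤ C * W p

namespace CnBounded

variable {m n : ℕ} {f : P → E → A} {V W : P → ℝ}

lemma weight_nonneg (hf : CnBounded n f W) (p : P) : 0 ≤ W p := by
  obtain ⟨-, C, hC, hb⟩ := hf
  exact nonneg_of_mul_nonneg_right ((norm_nonneg _).trans (hb p 0 n.zero_le 0)) hC

lemma exists_norm_le (hf : CnBounded n f W) : ∃ C > 0, ∀ p k, ‖f p k‖ ≤ C * W p := by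
  obtain ⟨-, C, hC, hb⟩ := hf
  exact ⟨C, hC, fun p k => by simpa using hb p 0 n.zero_le k⟩

lemma of_le (hf : CnBounded n f W) (hmn : m ≤ n) : CnBounded m f W := by
  obtain ⟨hs, C, hC, hb⟩ := hf
  exact ⟨fun p => (hs p).of_le (mod_cast hmn), C, hC, fun p i hi => hb p i (hi.trans hmn)⟩

lemma reindex (hf : CnBounded n f W) (r : Q → P) :
    CnBounded n (fun q => f (r q)) (W ∘ r) := by
  obtain ⟨hs, C, hC, hb⟩ := hf
  exact ⟨fun q => hs (r q), C, hC, fun q => hb (r q)⟩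

lemma clm_comp (hf : CnBounded n f W) (L : A →L[ℝ] F) : CnBounded n (fun p k => L (f p k)) W := by
  have := hf.weight_nonneg
  obtain ⟨hs, C, hC, hb⟩ := hf
  refine ⟨fun p => L.contDiff.comp (hs p), (‖L‖ + 1) * C, by positivity, fun p i hi k => ?_⟩
  calc ‖iteratedFDeriv ℝ i (L ∘ f p) k‖ ≤ ‖L‖ * ‖iteratedFDeriv ℝ i (f p) k‖ :=
        L.norm_iteratedFDeriv_comp_left (hs p).contDiffAt (mod_cast hi)
    _ ≤ (‖L‖ + 1) * (C * W p) := by gcongr; exacts [by simp, hb p i hi k]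
    _ = (‖L‖ + 1) * C * W p := by ring

lemma smul {𝕜 : Type*} [NormedField 𝕜] [NormedAlgebra ℝ 𝕜] [NormedSpace 𝕜 A]
    [IsScalarTower ℝ 𝕜 A] {c : P → E → 𝕜} (hc : CnBounded n c V) (hf : CnBounded n f W) :
    CnBounded n (fun p k => c p k • f p k) (V * W) := by
  have hV := hc.weight_nonneg
  have hW := hf.weight_nonneg
  obtain ⟨hcs, C, hC, hcb⟩ := hc
  obtain ⟨hfs, D, hD, hfb⟩ := hf
  refine ⟨fun p => (hcs p).smul (hfs p), 2 ^ n * (C * D), by positivity, fun p m hm k => ?_⟩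
  calc ‖iteratedFDeriv ℝ m (fun k => c p k • f p k) k‖
      ≤ ∑ i ∈ Finset.range (m + 1), (m.choose i : ℝ) * ‖iteratedFDeriv ℝ i (c p) k‖ *
          ‖iteratedFDeriv ℝ (m - i) (f p) k‖ :=
        norm_iteratedFDeriv_smul_le (hcs p) (hfs p) k (mod_cast hm)
    _ ≤ ∑ i ∈ Finset.range (m + 1), (m.choose i : ℝ) * (C * V p) * (D * W p) := by
        gcongr with i hi
        · exact mul_nonneg (Nat.cast_nonneg _) (mul_nonneg hC.le (hV p))
        · exact hcb p i (by grind) k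
        · exact hfb p _ (by grind) k
    _ = 2 ^ m * (C * D) * (V p * W p) := by
        rw [← Finset.sum_mul, ← Finset.sum_mul, ← Nat.cast_sum, Nat.sum_range_choose]
        push_cast
        ring
    _ ≤ 2 ^ n * (C * D) * (V p * W p) := by
        gcongr
        exacts [mul_nonneg (hV p) (hW p), one_le_two]

lemma fderiv_apply (hf : CnBounded (n + 1) f W) {v : P → E} (hv : ∀ p, ‖v p‖ ≤ 1) :
    CnBounded n (fun p k => fderiv ℝ (f p) k (v p)) W := by
  have := hf.weight_nonneg
  obtain ⟨hs, C, hC, hb⟩ := hf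
  have hs' p : ContDiff ℝ n (fderiv ℝ (f p)) := (hs p).fderiv_right (mod_cast le_rfl)
  refine ⟨fun p => (hs' p).clm_apply contDiff_const, C, hC, fun p m hm k => ?_⟩
  calc ‖iteratedFDeriv ℝ m (fun k => fderiv ℝ (f p) k (v p)) k‖
      ≤ ‖v p‖ * ‖iteratedFDeriv ℝ m (fderiv ℝ (f p)) k‖ :=
        norm_iteratedFDeriv_clm_apply_const (hs' p).contDiffAt (mod_cast hm)
    _ ≤ 1 * (C * W p) := by
        gcongr
        · exact hv p
        · rw [norm_iteratedFDeriv_fderiv]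
          exact hb p (m + 1) (by lia) k
    _ = C * W p := one_mul _

/-- Faà di Bruno: only the derivatives of the outer function at the points reached matter. -/
lemma comp_of_bound {g : P → A → F} {f : P → E → A} (hf : CnBounded n f 1)
    (hgs : ∀ p, ContDiff ℝ n (g p)) {C : ℝ} (hC : 0 < C)
    (hg : ∀ p, ∀ m ≤ n, ∀ k, ‖iteratedFDeriv ℝ m (g p) (f p k)‖ ≤ C * W p) :
    CnBounded n (fun p k => g p (f p k)) W := by
  obtain ⟨hfs, D, hD, hfb⟩ := hf
  have hD1 : 1 ≤ D + 1 := by linarith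
  refine ⟨fun p => (hgs p).comp (hfs p), n.factorial * C * (D + 1) ^ n, by positivity,
    fun p m hm k => ?_⟩
  have hCW : 0 ≤ C * W p := (norm_nonneg _).trans (hg p 0 n.zero_le 0)
  calc ‖iteratedFDeriv ℝ m (g p ∘ f p) k‖ ≤ m.factorial * (C * W p) * (D + 1) ^ m := by
        refine norm_iteratedFDeriv_comp_le (hgs p) (hfs p) (mod_cast hm) k
          (fun i hi => hg p i (hi.trans hm) k) fun i h1 hi => ?_
        calc ‖iteratedFDeriv ℝ i (f p) k‖ ≤ D := by simpa using hfb p i (hi.trans hm) k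
          _ ≤ D + 1 := by linarith
          _ ≤ (D + 1) ^ i := le_self_pow₀ hD1 (by lia)
    _ ≤ n.factorial * (C * W p) * (D + 1) ^ n := by
        gcongr
    _ = n.factorial * C * (D + 1) ^ n * W p := by ring

lemma comp {g : P → A → F} {f : P → E → A} (hg : CnBounded n g W) (hf : CnBounded n f 1) :
    CnBounded n (fun p k => g p (f p k)) W := by
  obtain ⟨hgs, C, hC, hgb⟩ := hg
  exact hf.comp_of_bound hgs hC fun p m hm k => hgb p m hm _

lemma contDiff_comp [ProperSpace A] {f : P → E → A} (hf : CnBounded n f 1) {g : A → F}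
    (hg : ContDiff ℝ n g) : CnBounded n (fun p k => g (f p k)) 1 := by
  obtain ⟨R, -, hR⟩ := hf.exists_norm_le
  have hbound (m : ℕ) (hm : m ≤ n) :
      ∃ C, ∀ a ∈ Metric.closedBall (0 : A) R, ‖iteratedFDeriv ℝ m g a‖ ≤ C :=
    (isCompact_closedBall 0 R).exists_bound_of_continuousOn
      (hg.continuous_iteratedFDeriv (mod_cast hm)).continuousOn
  choose! C hC using hbound
  refine hf.comp_of_bound (fun _ => hg) (C := ∑ m ∈ Finset.range (n + 1), |C m| + 1)
    (by positivity) fun p m hm k => ?_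
  calc ‖iteratedFDeriv ℝ m g (f p k)‖ ≤ |C m| :=
        (hC m hm _ (by simpa using hR p k)).trans (le_abs_self _)
    _ ≤ ∑ m ∈ Finset.range (n + 1), |C m| :=
        Finset.single_le_sum (fun i _ => abs_nonneg (C i)) (by simpa using Nat.lt_succ_of_le hm)
    _ ≤ (∑ m ∈ Finset.range (n + 1), |C m| + 1) * (1 : P → ℝ) p := by simp

lemma translate (hf : CnBounded n f W) (y : P → E) : CnBounded n (fun p k => f p (k + y p)) W := by
  obtain ⟨hs, C, hC, hb⟩ := hf
  refine ⟨fun p => (hs p).comp (contDiff_id.add contDiff_const), C, hC, fun p m hm k => ?_⟩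
  rw [iteratedFDeriv_comp_add_right]
  exact hb p m hm _

lemma differenceQuotient {f : E → A} (hf : CnBounded (n + 1) (fun _ : Unit => f) 1) :
    CnBounded n (fun (y k : E) => ‖y‖⁻¹ • (f (k + y) - f k)) 1 := by
  obtain ⟨hs, C, hC, hb⟩ := hf
  replace hs : ContDiff ℝ (n + 1 : ℕ) f := hs ()
  have hsn : ContDiff ℝ n f := hs.of_le (mod_cast n.le_succ)
  have hshift (y : E) : ContDiff ℝ n fun k => f (k + y) :=
    hsn.comp (contDiff_id.add contDiff_const)
  refine ⟨fun y => contDiff_const.smul ((hshift y).sub hsn), C, hC, fun y m hm k => ?_⟩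
  have hlip : ‖iteratedFDeriv ℝ m f (k + y) - iteratedFDeriv ℝ m f k‖ ≤ C * ‖y‖ := by
    have hdiff : Differentiable ℝ (iteratedFDeriv ℝ m f) :=
      hs.differentiable_iteratedFDeriv (mod_cast Nat.lt_succ_of_le hm)
    simpa using convex_univ.norm_image_sub_le_of_norm_fderiv_le (fun z _ => hdiff z)
      (fun z _ => by simpa [← norm_fderiv_iteratedFDeriv] using hb () (m + 1) (by lia) z)
      (Set.mem_univ k) (Set.mem_univ (k + y))
  have hderiv : iteratedFDeriv ℝ m (fun k => ‖y‖⁻¹ • (f (k + y) - f k)) k =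
      ‖y‖⁻¹ • (iteratedFDeriv ℝ m f (k + y) - iteratedFDeriv ℝ m f k) := by
    have hle : ((m : ℕ) : WithTop ℕ∞) ≤ n := mod_cast hm
    rw [iteratedFDeriv_const_smul_apply' (((hshift y).sub hsn).of_le hle).contDiffAt,
      fun_iteratedFDeriv_sub_apply ((hshift y).of_le hle).contDiffAt (hsn.of_le hle).contDiffAt,
      iteratedFDeriv_comp_add_right]
  rw [hderiv, norm_smul, norm_inv, norm_norm, Pi.one_apply, mul_one]
  rcases eq_or_ne y 0 with rfl | hy
  · simpa using hC.le
  · rwa [inv_mul_le_iff₀ (norm_pos_iff.2 hy), mul_comm]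

end CnBounded

end CnBounded

section Torus

variable {ι G : Type*}

/-- The fundamental cell `(-π, π]^ι` of the torus. -/
abbrev torusCell (ι : Type*) : Set (ι → ℝ) := Set.univ.pi fun _ => Set.Ioc (-π) π

/-- The period lattice `(2πℤ)^ι` of the torus. -/
noncomputable def torusLattice (ι : Type*) : AddSubgroup (ι → ℝ) :=
  AddSubgroup.pi Set.univ fun _ => AddSubgroup.zmultiples (2 * π)

/-- Invariance under `(2πℤ)^ι`. Functions on the torus are encoded as such functions on
`ι → ℝ`. -/
def TorusPeriodic (F : (ι → ℝ) → G) : Prop :=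
  ∀ g ∈ torusLattice ι, ∀ k, F (k + g) = F k

lemma mem_torusLattice {g : ι → ℝ} :
    g ∈ torusLattice ι ↔ ∀ j, ∃ n : ℤ, g j = n * (2 * π) := by
  simp [torusLattice, AddSubgroup.mem_pi, AddSubgroup.mem_zmultiples_iff, eq_comm]

lemma existsUnique_vadd_mem_torusCell (k : ι → ℝ) :
    ∃! g : torusLattice ι, g +ᵥ k ∈ torusCell ι := by
  have hcoord (j : ι) : ∃! n : ℤ, n * (2 * π) + k j ∈ Set.Ioc (-π) π := by
    have h := existsUnique_add_zsmul_mem_Ioc Real.two_pi_pos (k j) (-π)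
    rw [show -π + 2 * π = π by ring] at h
    simpa only [zsmul_eq_mul, add_comm (k j)] using h
  choose n hn huniq using hcoord
  refine ⟨⟨fun j => n j * (2 * π), mem_torusLattice.2 fun j => ⟨n j, rfl⟩⟩, fun j _ => hn j,
    fun ⟨g, hg⟩ hgk => Subtype.ext (funext fun j => ?_)⟩
  obtain ⟨m, hm⟩ := mem_torusLattice.1 hg j
  have hmem : g j + k j ∈ Set.Ioc (-π) π := hgk j (Set.mem_univ j)
  change g j = n j * (2 * π)
  rw [hm] at hmem ⊢
  rw [huniq j m hmem]

lemma torusCell_subset_Icc : torusCell ι ⊆ Set.Icc (fun _ => -π) fun _ => π := fun _ hk =>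
  ⟨fun j => (hk j (Set.mem_univ j)).1.le, fun j => (hk j (Set.mem_univ j)).2⟩

namespace TorusPeriodic

variable {F : (ι → ℝ) → G}

lemma comp_left {H : Type*} (hF : TorusPeriodic F) (f : G → H) : TorusPeriodic fun k => f (F k) :=
  fun g hg k => congrArg f (hF g hg k)

lemma comp₂ {G' H : Type*} {F' : (ι → ℝ) → G'} (hF : TorusPeriodic F) (hF' : TorusPeriodic F')
    (f : G → G' → H) : TorusPeriodic fun k => f (F k) (F' k) :=
  fun g hg k => congrArg₂ f (hF g hg k) (hF' g hg k)

lemma translate (hF : TorusPeriodic F) (y : ι → ℝ) : TorusPeriodic fun k => F (k + y) :=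
  fun g hg k => by simpa only [add_right_comm] using hF g hg (k + y)

lemma of_single [Finite ι] [DecidableEq ι] (hF : ∀ k j, F (k + Pi.single j (2 * π)) = F k) :
    TorusPeriodic F := by
  cases nonempty_fintype ι
  intro g hg
  choose n hn using mem_torusLattice.1 hg
  have hcoord (j : ι) : Function.Periodic F (Pi.single j (g j)) := by
    have hj : Pi.single j (g j) = n j • (Pi.single j (2 * π) : ι → ℝ) := by
      rw [← Pi.single_smul, zsmul_eq_mul, hn j]
    exact hj ▸ Function.Periodic.zsmul (hF · j) (n j)
  have hsum (s : Finset ι) : Function.Periodic F (∑ j ∈ s, Pi.single j (g j)) := by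
    induction s using Finset.induction_on with
    | empty => simp [Function.Periodic]
    | insert j s hj ih => rw [Finset.sum_insert hj]; exact (hcoord j).add_period ih
  exact Finset.univ_sum_single g ▸ hsum Finset.univ

lemma exists_mem_torusCell (hF : TorusPeriodic F) (k : ι → ℝ) : ∃ k' ∈ torusCell ι, F k' = F k := by
  obtain ⟨g, hg, -⟩ := existsUnique_vadd_mem_torusCell k
  refine ⟨g +ᵥ k, hg, ?_⟩
  rw [AddSubgroup.vadd_def, vadd_eq_add, add_comm, hF g g.2]

lemma exists_norm_le [NormedAddCommGroup G] (hF : TorusPeriodic F) (hc : Continuous F) :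
    ∃ C, ∀ k, ‖F k‖ ≤ C := by
  obtain ⟨C, hC⟩ := isCompact_Icc.exists_bound_of_continuousOn
    (hc.continuousOn (s := Set.Icc (fun _ => -π) fun _ => π))
  refine ⟨C, fun k => ?_⟩
  obtain ⟨k', hk', hFk⟩ := hF.exists_mem_torusCell k
  exact hFk ▸ hC k' (torusCell_subset_Icc hk')

protected lemma fderiv [Finite ι] [NormedAddCommGroup G] [NormedSpace ℝ G]
    (hF : TorusPeriodic F) : TorusPeriodic (fderiv ℝ F) := by
  cases nonempty_fintype ι
  intro g hg k
  rw [← fderiv_comp_add_right, funext (hF g hg)]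

lemma fderiv_apply [Finite ι] [NormedAddCommGroup G] [NormedSpace ℝ G]
    (hF : TorusPeriodic F) (v : ι → ℝ) :
    TorusPeriodic fun k => fderiv ℝ F k v :=
  hF.fderiv.comp_left (· v)

end TorusPeriodic

section Integral

lemma measurableSet_torusCell [Countable ι] : MeasurableSet (torusCell ι) :=
  .univ_pi fun _ => measurableSet_Ioc

variable [Fintype ι] [NormedAddCommGroup G]

lemma norm_le_pi_of_mem_torusCell {k : ι → ℝ} (hk : k ∈ torusCell ι) : ‖k‖ ≤ π :=
  (pi_norm_le_iff_of_nonneg Real.pi_nonneg).2 fun j =>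
    abs_le.2 ⟨(hk j (Set.mem_univ j)).1.le, (hk j (Set.mem_univ j)).2⟩

lemma integrableOn_torusCell {F : (ι → ℝ) → G} (hF : Continuous F) :
    IntegrableOn F (torusCell ι) :=
  hF.integrableOn_Icc.mono_set torusCell_subset_Icc

lemma norm_setIntegral_torusCell_le [NormedSpace ℝ G] {F : (ι → ℝ) → G} {C : ℝ}
    (hF : ∀ k, ‖F k‖ ≤ C) : ‖∫ k in torusCell ι, F k‖ ≤ C * volume.real (torusCell ι) :=
  norm_setIntegral_le_of_norm_le_const
    ((measure_mono torusCell_subset_Icc).trans_lt isCompact_Icc.measure_lt_top) fun k _ => hF k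

lemma setIntegral_swap_of_continuous [NormedSpace ℝ G] {X Y : Type*} [TopologicalSpace X]
    [TopologicalSpace Y] [MeasurableSpace X] [MeasurableSpace Y] [BorelSpace X] [BorelSpace Y]
    [SecondCountableTopology X] [T2Space X] [T2Space Y] [SecondCountableTopology Y]
    {μ : Measure X} {ν : Measure Y} [SFinite μ] [SFinite ν] [IsFiniteMeasureOnCompacts μ]
    [IsFiniteMeasureOnCompacts ν] {F : X → Y → G} (hF : Continuous (Function.uncurry F))
    {s S : Set X} {t T : Set Y} (hS : IsCompact S) (hsS : s ⊆ S) (hT : IsCompact T) (htT : t ⊆ T) :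
    ∫ x in s, ∫ y in t, F x y ∂ν ∂μ = ∫ y in t, ∫ x in s, F x y ∂μ ∂ν := by
  refine integral_integral_swap ?_
  rw [Measure.prod_restrict]
  exact (hF.continuousOn.integrableOn_compact (hS.prod hT)).mono_set (Set.prod_mono hsS htT)

variable [NormedSpace ℝ G] {F : (ι → ℝ) → G}

lemma TorusPeriodic.setIntegral_translate (hF : TorusPeriodic F) (y : ι → ℝ) :
    ∫ k in torusCell ι, F (k + y) = ∫ k in torusCell ι, F k := by
  have : Countable (torusLattice ι) := by
    have : (torusLattice ι : Set (ι → ℝ)).Countable :=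
      Set.countable_univ_pi fun _ => Set.countable_range fun n : ℤ => n • (2 * π)
    exact this.to_subtype
  have hcell : IsAddFundamentalDomain (torusLattice ι) (torusCell ι) volume :=
    .mk' measurableSet_torusCell.nullMeasurableSet existsUnique_vadd_mem_torusCell
  have hshift : IsAddFundamentalDomain (torusLattice ι) ((· + y) ⁻¹' torusCell ι) volume :=
    .mk' (measurableSet_torusCell.preimage (measurable_add_const y)).nullMeasurableSet fun k => by
      simpa [AddSubgroup.vadd_def, add_assoc] using existsUnique_vadd_mem_torusCell (k + y)
  have hinv (g : torusLattice ι) (k : ι → ℝ) : F ((g +ᵥ k) + y) = F (k + y) := by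
    rw [AddSubgroup.vadd_def, vadd_eq_add, add_comm (g : ι → ℝ)]
    exact hF.translate y g g.2 k
  exact (hcell.setIntegral_eq hshift hinv).trans
    ((measurePreserving_add_right volume y).setIntegral_preimage_emb
      (measurableEmbedding_addRight y) F _)

lemma TorusPeriodic.setIntegral_fderiv_apply [CompleteSpace G] (hF : TorusPeriodic F)
    (hs : ContDiff ℝ 1 F) (v : ι → ℝ) : ∫ k in torusCell ι, fderiv ℝ F k v = 0 := by
  have hcont : Continuous fun k => fderiv ℝ F k v :=
    (hs.continuous_fderiv one_ne_zero).clm_apply continuous_const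
  have hftc (k : ι → ℝ) :
      ∫ r in Set.Ioc (0 : ℝ) 1, fderiv ℝ F (k + r • v) v = F (k + v) - F k := by
    have hderiv (r : ℝ) : HasDerivAt (fun r => F (k + r • v)) (fderiv ℝ F (k + r • v) v) r := by
      have hline : HasDerivAt (fun r : ℝ => k + r • v) v r := by
        simpa using ((hasDerivAt_id r).smul_const v).const_add k
      exact ((hs.differentiable one_ne_zero) _).hasFDerivAt.comp_hasDerivAt r hline
    rw [← intervalIntegral.integral_of_le zero_le_one,
      intervalIntegral.integral_eq_sub_of_hasDerivAt (fun r _ => hderiv r)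
        ((hcont.comp (by fun_prop)).intervalIntegrable 0 1)]
    simp
  calc ∫ k in torusCell ι, fderiv ℝ F k v
      = ∫ _ in Set.Ioc (0 : ℝ) 1, ∫ k in torusCell ι, fderiv ℝ F k v := by simp
    _ = ∫ r in Set.Ioc (0 : ℝ) 1, ∫ k in torusCell ι, fderiv ℝ F (k + r • v) v := by
        simp_rw [(hF.fderiv_apply v).setIntegral_translate]
    _ = ∫ k in torusCell ι, (F (k + v) - F k) := by
        simp_rw [← hftc]
        refine setIntegral_swap_of_continuous ?_ isCompact_Icc Set.Ioc_subset_Icc_self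
          isCompact_Icc torusCell_subset_Icc
        exact hcont.comp (f := fun q : ℝ × (ι → ℝ) => q.2 + q.1 • v) (by fun_prop)
    _ = 0 := by
        have hshift : Continuous fun k => F (k + v) := hs.continuous.comp (continuous_add_const v)
        rw [integral_sub (integrableOn_torusCell hshift) (integrableOn_torusCell hs.continuous),
          hF.setIntegral_translate, sub_self]

end Integral

end Torus

section PeriodicFamilies

variable {P ι A S : Type*} [Fintype ι] [NormedAddCommGroup A] [NormedSpace ℝ A]
  [NormedAddCommGroup S] [NormedSpace ℝ S] {n : ℕ}

lemma TorusPeriodic.iteratedFDeriv {F : (ι → ℝ) → A} (hF : TorusPeriodic F) (m : ℕ) :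
    TorusPeriodic (iteratedFDeriv ℝ m F) := fun g hg k => by
  rw [← iteratedFDeriv_comp_add_right, funext (hF g hg)]

lemma norm_iteratedFDeriv_slice_le {E : Type*} [NormedAddCommGroup E] [NormedSpace ℝ E]
    {f : S × E → A} {m : ℕ} (hf : ContDiff ℝ m f) (s : S) (k : E) :
    ‖iteratedFDeriv ℝ m (fun k => f (s, k)) k‖ ≤ ‖iteratedFDeriv ℝ m f (s, k)‖ := by
  let inr := ContinuousLinearMap.inr ℝ S E
  have hslice : (fun k => f (s, k)) = (fun z => f (z + (s, 0))) ∘ inr := by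
    ext k
    simp [inr]
  have hshift : ContDiff ℝ m fun z => f (z + (s, 0)) := hf.comp (contDiff_id.add contDiff_const)
  rw [hslice, inr.iteratedFDeriv_comp_right hshift k le_rfl, iteratedFDeriv_comp_add_right]
  calc ‖(iteratedFDeriv ℝ m f (inr k + (s, 0))).compContinuousLinearMap fun _ => inr‖
      ≤ ‖iteratedFDeriv ℝ m f (inr k + (s, 0))‖ * ∏ _ : Fin m, ‖inr‖ :=
        ContinuousMultilinearMap.norm_compContinuousLinearMap_le _ _
    _ ≤ ‖iteratedFDeriv ℝ m f (inr k + (s, 0))‖ * 1 := by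
        gcongr
        exact Finset.prod_le_one (fun _ _ => norm_nonneg _) fun _ _ =>
          ContinuousLinearMap.norm_inr_le_one ℝ S E
    _ = ‖iteratedFDeriv ℝ m f (s, k)‖ := by simp [inr]

namespace CnBounded

lemma of_periodic_uncurry {K : Set S} (hK : IsCompact K) {f : S → (ι → ℝ) → A}
    (hf : ContDiff ℝ n (Function.uncurry f)) (hper : ∀ s ∈ K, TorusPeriodic (f s)) :
    CnBounded n (fun s : K => f s) 1 := by
  have hbound (m : ℕ) (hm : m ≤ n) : ∃ C, ∀ s ∈ K, ∀ k, ‖iteratedFDeriv ℝ m (f s) k‖ ≤ C := by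
    obtain ⟨C, hC⟩ := (hK.prod (isCompact_Icc (a := fun _ : ι => -π) (b := fun _ => π)))
      |>.exists_bound_of_continuousOn
        (hf.continuous_iteratedFDeriv (m := m) (mod_cast hm)).continuousOn
    refine ⟨C, fun s hs k => ?_⟩
    obtain ⟨k', hk', hkk'⟩ := ((hper s hs).iteratedFDeriv m).exists_mem_torusCell k
    rw [← hkk']
    exact (norm_iteratedFDeriv_slice_le (hf.of_le (mod_cast hm)) s k').trans
      (hC (s, k') ⟨hs, torusCell_subset_Icc hk'⟩)
  choose! C hC using hbound
  refine ⟨fun s => hf.comp (contDiff_const.prodMk contDiff_id),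
    ∑ m ∈ Finset.range (n + 1), |C m| + 1, by positivity, fun s m hm k => ?_⟩
  calc ‖iteratedFDeriv ℝ m (f s) k‖ ≤ |C m| := (hC m hm s s.2 k).trans (le_abs_self _)
    _ ≤ ∑ m ∈ Finset.range (n + 1), |C m| :=
        Finset.single_le_sum (fun i _ => abs_nonneg (C i)) (by simpa using Nat.lt_succ_of_le hm)
    _ ≤ (∑ m ∈ Finset.range (n + 1), |C m| + 1) * (1 : K → ℝ) s := by simp

lemma of_periodic {f : (ι → ℝ) → A} (hf : ContDiff ℝ n f) (hper : TorusPeriodic f) :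
    CnBounded n (fun _ : P => f) 1 :=
  (of_periodic_uncurry (isCompact_singleton (x := (0 : ℝ))) (f := fun _ => f)
    (hf.comp contDiff_snd) fun _ _ => hper).reindex fun _ => ⟨0, rfl⟩

end CnBounded

end PeriodicFamilies

section OscillatoryIntegral

lemma norm_exp_I_mul_ofReal_mul (r : ℝ) (z : ℂ) : ‖Complex.exp (Complex.I * r) * z‖ = ‖z‖ := by
  rw [norm_mul, mul_comm Complex.I, Complex.norm_exp_ofReal_mul_I, one_mul]

lemma continuous_exp_phase_mul {X : Type*} [TopologicalSpace X] {τ : ℝ} {ψ : X → ℝ} {a : X → ℂ}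
    (hψ : Continuous ψ) (ha : Continuous a) :
    Continuous fun k => Complex.exp (Complex.I * (τ * ψ k : ℝ)) * a k := by
  fun_prop

lemma fderiv_exp_phase_mul_apply {E : Type*} [NormedAddCommGroup E] [NormedSpace ℝ E] {τ : ℝ}
    {ψ : E → ℝ} {a : E → ℂ} {k : E} (hψ : DifferentiableAt ℝ ψ k)
    (ha : DifferentiableAt ℝ a k) (v : E) :
    fderiv ℝ (fun k => Complex.exp (Complex.I * (τ * ψ k : ℝ)) * a k) k v =
      Complex.exp (Complex.I * (τ * ψ k : ℝ)) * fderiv ℝ a k v +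
        Complex.I * τ * (Complex.exp (Complex.I * (τ * ψ k : ℝ)) * (fderiv ℝ ψ k v • a k)) := by
  have hphase : HasFDerivAt (fun k => ((τ * ψ k : ℝ) : ℂ))
      (Complex.ofRealCLM.comp (τ • fderiv ℝ ψ k)) k :=
    Complex.ofRealCLM.hasFDerivAt.comp k (hψ.hasFDerivAt.const_mul τ)
  rw [((hphase.const_mul Complex.I).cexp.fun_mul ha.hasFDerivAt).fderiv]
  simp only [Complex.ofReal_mul, add_apply, smul_apply,
    ContinuousLinearMap.comp_apply, Complex.ofRealCLM_apply, smul_eq_mul, Complex.real_smul]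
  ring

variable {ι : Type*} [Fintype ι]

/-- The oscillatory integral `∫ e^{iτψ(k)} a(k) dk` over the torus. -/
noncomputable def oscInt (τ : ℝ) (ψ : (ι → ℝ) → ℝ) (a : (ι → ℝ) → ℂ) : ℂ :=
  ∫ k in torusCell ι, Complex.exp (Complex.I * (τ * ψ k : ℝ)) * a k

lemma norm_oscInt_le {τ : ℝ} {ψ : (ι → ℝ) → ℝ} {a : (ι → ℝ) → ℂ} {C : ℝ} (ha : ∀ k, ‖a k‖ ≤ C) :
    ‖oscInt τ ψ a‖ ≤ C * volume.real (torusCell ι) :=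
  norm_setIntegral_torusCell_le fun k => (norm_exp_I_mul_ofReal_mul _ _).trans_le (ha k)

lemma oscInt_fderiv_phase_smul {τ : ℝ} (hτ : τ ≠ 0) {ψ : (ι → ℝ) → ℝ} {a : (ι → ℝ) → ℂ}
    (hψ : ContDiff ℝ 1 ψ) (hψp : TorusPeriodic ψ) (ha : ContDiff ℝ 1 a) (hap : TorusPeriodic a)
    (v : ι → ℝ) : oscInt τ ψ (fun k => fderiv ℝ ψ k v • a k) =
      Complex.I / τ * oscInt τ ψ fun k => fderiv ℝ a k v := by
  have hψ' : Continuous fun k => fderiv ℝ ψ k v :=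
    (hψ.continuous_fderiv one_ne_zero).clm_apply continuous_const
  have ha' : Continuous fun k => fderiv ℝ a k v :=
    (ha.continuous_fderiv one_ne_zero).clm_apply continuous_const
  have hsmooth : ContDiff ℝ 1 fun k => Complex.exp (Complex.I * (τ * ψ k : ℝ)) * a k :=
    (contDiff_const.mul (Complex.ofRealCLM.contDiff.comp (contDiff_const.mul hψ))).cexp.mul ha
  have hIBP : oscInt τ ψ (fun k => fderiv ℝ a k v) +
      Complex.I * τ * oscInt τ ψ (fun k => fderiv ℝ ψ k v • a k) = 0 := by
    have hzero := (TorusPeriodic.comp₂ hψp hap fun r z => Complex.exp (Complex.I * (τ * r : ℝ)) * z)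
      |>.setIntegral_fderiv_apply hsmooth v
    rw [oscInt, oscInt, ← integral_const_mul, ← integral_add, ← hzero]
    · exact integral_congr_ae (.of_forall fun k => (fderiv_exp_phase_mul_apply
        (hψ.differentiable one_ne_zero k) (ha.differentiable one_ne_zero k) v).symm)
    · exact integrableOn_torusCell (continuous_exp_phase_mul hψ.continuous ha')
    · exact integrableOn_torusCell (continuous_const.mul
        (continuous_exp_phase_mul hψ.continuous (hψ'.smul ha.continuous)))
  have hτ' : (τ : ℂ) ≠ 0 := mod_cast hτ
  field_simp
  linear_combination (-Complex.I) * hIBP +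
    τ * oscInt τ ψ (fun k => fderiv ℝ ψ k v • a k) * Complex.I_sq

lemma oscInt_smul_sub_const (τ : ℝ) {γ w : (ι → ℝ) → ℝ}
    {b : (ι → ℝ) → ℂ} (hγ : Continuous γ) (hw : Continuous w) (hb : Continuous b) (z : ℂ) :
    oscInt τ γ (fun k => w k • (b k - z)) =
      oscInt τ γ (fun k => w k • b k) - z * oscInt τ γ fun k => (w k : ℂ) := by
  rw [oscInt, oscInt, oscInt, ← integral_const_mul, ← integral_sub]
  · simp only [Complex.real_smul]
    congr 1 with k
    ring
  · exact integrableOn_torusCell (continuous_exp_phase_mul hγ (hw.smul hb))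
  · exact (integrableOn_torusCell (continuous_exp_phase_mul hγ
      (Complex.continuous_ofReal.comp hw))).const_mul _

end OscillatoryIntegral

section NonstationaryPhase

lemma exists_contDiff_mul_eq_one_of_le_abs {c : ℝ} (hc : 0 < c) :
    ∃ h : ℝ → ℝ, ContDiff ℝ (⊤ : ℕ∞) h ∧ ∀ s, c ≤ |s| → h s * s = 1 := by
  let f : ContDiffBump (0 : ℝ) := ⟨c / 2, c, half_pos hc, half_lt_self hc⟩
  have hpos (s : ℝ) : s ^ 2 + f s ≠ 0 := by
    rcases eq_or_ne s 0 with rfl | hs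
    · simp [f.one_of_mem_closedBall (Metric.mem_closedBall_self (half_pos hc).le)]
    · have := f.nonneg (x := s)
      positivity
  refine ⟨fun s => s / (s ^ 2 + f s), contDiff_id.div ((contDiff_id.pow 2).add f.contDiff) hpos,
    fun s hs => ?_⟩
  have hfs : f s = 0 := f.zero_of_le_dist (by simpa [f] using hs)
  have hs0 : s ≠ 0 := abs_pos.1 (hc.trans_le hs)
  field_simp [hfs]
  simp [hfs]

lemma fderiv_eq_zero_of_isOpen_of_forall_eq_zero {E A : Type*} [NormedAddCommGroup E]
    [NormedSpace ℝ E] [NormedAddCommGroup A] [NormedSpace ℝ A] {F : E → A} {U : Set E}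
    (hU : IsOpen U) (hF : ∀ k ∈ U, F k = 0) {k : E} (hk : k ∈ U) : fderiv ℝ F k = 0 := by
  have hlocal : F =ᶠ[nhds k] fun _ => 0 := Filter.eventually_of_mem (hU.mem_nhds hk) hF
  simp [hlocal.fderiv_eq]

variable {ι P : Type*} [Fintype ι]

lemma oscInt_eq_of_nonstationary {τ : ℝ} (hτ : τ ≠ 0) {ψ q : (ι → ℝ) → ℝ} {a : (ι → ℝ) → ℂ}
    (hψ : ContDiff ℝ 1 ψ) (hψp : TorusPeriodic ψ) (hqa : ContDiff ℝ 1 fun k => q k • a k)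
    (hqap : TorusPeriodic fun k => q k • a k) {v : ι → ℝ}
    (hq : ∀ k, a k ≠ 0 → q k * fderiv ℝ ψ k v = 1) :
    oscInt τ ψ a = Complex.I / τ * oscInt τ ψ fun k => fderiv ℝ (fun k => q k • a k) k v := by
  rw [← oscInt_fderiv_phase_smul hτ hψ hψp hqa hqap]
  congr 1
  ext k
  by_cases hk : a k = 0
  · simp [hk]
  · rw [smul_smul, mul_comm, hq k hk, one_smul]

/-- Each integration by parts along `v p`, against the smooth cut-off inverse `h` of `∂_v ψ`,
gains one power of `τ` and keeps the amplitude supported where `∂_v ψ` is bounded below. -/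
theorem CnBounded.exists_norm_oscInt_le_of_nonstationary {n : ℕ} {ψ : P → (ι → ℝ) → ℝ}
    (hψ : CnBounded (n + 1) ψ 1) (hψp : ∀ p, TorusPeriodic (ψ p)) {v : P → ι → ℝ}
    (hv : ∀ p, ‖v p‖ ≤ 1) {c : ℝ} (hc : 0 < c) {W : P → ℝ} {a : P → (ι → ℝ) → ℂ}
    (ha : CnBounded n a W) (hap : ∀ p, TorusPeriodic (a p))
    (hlow : ∀ p k, a p k ≠ 0 → c ≤ |fderiv ℝ (ψ p) k (v p)|) :
    ∃ C > 0, ∀ p τ, τ ≠ 0 → ‖oscInt τ (ψ p) (a p)‖ ≤ C * W p * (|τ| ^ n)⁻¹ := by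
  induction n generalizing a with
  | zero =>
    obtain ⟨C, hC, hb⟩ := ha.exists_norm_le
    refine ⟨C * (volume.real (torusCell ι) + 1), by positivity, fun p τ _ => ?_⟩
    calc ‖oscInt τ (ψ p) (a p)‖ ≤ C * W p * volume.real (torusCell ι) := norm_oscInt_le (hb p)
      _ ≤ C * W p * (volume.real (torusCell ι) + 1) := by
          gcongr
          exacts [mul_nonneg hC.le (ha.weight_nonneg p), by simp]
      _ = C * (volume.real (torusCell ι) + 1) * W p * (|τ| ^ 0)⁻¹ := by ring
  | succ n ih =>
    obtain ⟨h, hh, hinv⟩ := exists_contDiff_mul_eq_one_of_le_abs hc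
    have hderiv : CnBounded (n + 1) (fun p k => fderiv ℝ (ψ p) k (v p)) 1 := hψ.fderiv_apply hv
    have hquot : CnBounded (n + 1) (fun p k => h (fderiv ℝ (ψ p) k (v p)) • a p k) W :=
      one_mul W ▸ (hderiv.contDiff_comp (hh.of_le (mod_cast le_top))).smul ha
    have hquotp p : TorusPeriodic fun k => h (fderiv ℝ (ψ p) k (v p)) • a p k :=
      ((hψp p).fderiv_apply (v p)).comp₂ (hap p) fun r z => h r • z
    obtain ⟨C, hC, hb⟩ := ih (hψ.of_le n.succ.le_succ) (hquot.fderiv_apply hv)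
      (fun p => (hquotp p).fderiv_apply (v p)) fun p k => by
        contrapose!
        intro hk
        have hopen : IsOpen {k | |fderiv ℝ (ψ p) k (v p)| < c} :=
          isOpen_lt (hderiv.1 p).continuous.abs continuous_const
        have hzero (k) (hk : |fderiv ℝ (ψ p) k (v p)| < c) : a p k = 0 :=
          of_not_not fun hak => not_lt.2 (hlow p k hak) hk
        rw [fderiv_eq_zero_of_isOpen_of_forall_eq_zero hopen
          (fun k hk => by rw [hzero k hk, smul_zero]) hk, zero_apply]
    refine ⟨C, hC, fun p τ hτ => ?_⟩
    have hone {m : ℕ} : ((1 : ℕ) : WithTop ℕ∞) ≤ (m + 1 : ℕ) := mod_cast Nat.le_add_left 1 m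
    rw [oscInt_eq_of_nonstationary hτ ((hψ.1 p).of_le (mod_cast hone)) (hψp p)
      ((hquot.1 p).of_le (mod_cast hone)) (hquotp p) fun k hk => hinv _ (hlow p k hk)]
    calc ‖Complex.I / τ * oscInt τ (ψ p) fun k =>
          fderiv ℝ (fun k => h (fderiv ℝ (ψ p) k (v p)) • a p k) k (v p)‖
        ≤ |τ|⁻¹ * (C * W p * (|τ| ^ n)⁻¹) := by
          rw [norm_mul, norm_div, Complex.norm_I, Complex.norm_real, one_div, norm_eq_abs]
          gcongr
          exact hb p τ hτ
      _ = C * W p * (|τ| ^ (n + 1))⁻¹ := by rw [pow_succ, mul_inv]; ring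

end NonstationaryPhase

section StationaryPhase

variable {ι P : Type*} [Fintype ι]

/-- Quantitative injectivity of the gradient of `γ` on `K`: for `k, k + y ∈ K`, some direction
depending only on the displacement `y` sees the difference of the gradients. -/
def SeparatesGradient (γ : (ι → ℝ) → ℝ) (K : Set (ι → ℝ)) (c : ℝ) : Prop :=
  ∀ y : ι → ℝ, ‖y‖ ≤ π → ∃ v : ι → ℝ, ‖v‖ ≤ 1 ∧
    ∀ k ∈ K, k + y ∈ K → c * ‖y‖ ≤ |fderiv ℝ γ (k + y) v - fderiv ℝ γ k v|

lemma star_exp_I_mul_ofReal_mul_exp (r s : ℝ) :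
    star (Complex.exp (Complex.I * r)) * Complex.exp (Complex.I * s) =
      Complex.exp (Complex.I * (s - r : ℝ)) := by
  rw [Complex.star_def, ← Complex.exp_conj, map_mul, Complex.conj_I, Complex.conj_ofReal,
    ← Complex.exp_add]
  push_cast
  ring_nf

lemma norm_oscInt_sq_eq {τ : ℝ} {γ : (ι → ℝ) → ℝ} {a : (ι → ℝ) → ℂ} (hγ : Continuous γ)
    (hγp : TorusPeriodic γ) (ha : Continuous a) (hap : TorusPeriodic a) :
    ‖oscInt τ γ a‖ ^ 2 = ‖∫ y in torusCell ι,
      oscInt τ (fun k => γ (k + y) - γ k) fun k => star (a k) * a (k + y)‖ := by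
  set G : (ι → ℝ) → ℂ := fun k => Complex.exp (Complex.I * (τ * γ k : ℝ)) * a k with hG
  have hGc : Continuous G := continuous_exp_phase_mul hγ ha
  have hGp : TorusPeriodic G := hγp.comp₂ hap fun r z => Complex.exp (Complex.I * (τ * r : ℝ)) * z
  have hcorr (y k : ι → ℝ) : star (G k) * G (k + y) =
      Complex.exp (Complex.I * (τ * (γ (k + y) - γ k) : ℝ)) * (star (a k) * a (k + y)) := by
    rw [mul_sub, ← star_exp_I_mul_ofReal_mul_exp]
    simp only [hG, star_mul']
    ring
  calc ‖oscInt τ γ a‖ ^ 2 = ‖star (∫ k in torusCell ι, G k) * ∫ k in torusCell ι, G k‖ := by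
        rw [norm_mul, norm_star, sq]; rfl
    _ = ‖∫ k in torusCell ι, star (G k) * ∫ y in torusCell ι, G (k + y)‖ := by
        have hshift (k : ι → ℝ) : ∫ y in torusCell ι, G (k + y) = ∫ y in torusCell ι, G y := by
          simpa only [add_comm k] using hGp.setIntegral_translate k
        simp_rw [hshift, integral_mul_const]
        rw [Complex.star_def, ← integral_conj]
    _ = ‖∫ k in torusCell ι, ∫ y in torusCell ι, star (G k) * G (k + y)‖ := by
        simp_rw [integral_const_mul]
    _ = ‖∫ y in torusCell ι, ∫ k in torusCell ι, star (G k) * G (k + y)‖ := by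
        rw [setIntegral_swap_of_continuous _ isCompact_Icc torusCell_subset_Icc isCompact_Icc
          torusCell_subset_Icc]
        exact (hGc.comp continuous_fst).star.mul
          (hGc.comp (continuous_fst.add continuous_snd))
    _ = _ := by
        simp_rw [hcorr, oscInt]

lemma integrable_inv_one_add_norm_pow :
    Integrable fun y : ι → ℝ => ((1 + ‖y‖) ^ (Fintype.card ι + 1))⁻¹ := by
  have h := integrable_one_add_norm (E := ι → ℝ) (μ := volume)
    (r := (Fintype.card ι + 1 : ℕ)) (by simp)
  refine h.congr (.of_forall fun y => (rpow_neg (by positivity) _).trans ?_)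
  rw [rpow_natCast]

lemma setIntegral_inv_one_add_norm_smul_pow_le {r : ℝ} (hr : 0 < r) (s : Set (ι → ℝ)) :
    ∫ y in s, ((1 + ‖r • y‖) ^ (Fintype.card ι + 1))⁻¹ ≤
      (r ^ Fintype.card ι)⁻¹ * ∫ y : ι → ℝ, ((1 + ‖y‖) ^ (Fintype.card ι + 1))⁻¹ := by
  have hint := (integrable_comp_smul_iff volume _ hr.ne').2
    (integrable_inv_one_add_norm_pow (ι := ι))
  calc ∫ y in s, ((1 + ‖r • y‖) ^ (Fintype.card ι + 1))⁻¹
      ≤ ∫ y : ι → ℝ, ((1 + ‖r • y‖) ^ (Fintype.card ι + 1))⁻¹ :=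
        setIntegral_le_integral hint (.of_forall fun _ => by positivity)
    _ = _ := by
        rw [Measure.integral_comp_smul_of_nonneg volume
          (fun y : ι → ℝ => ((1 + ‖y‖) ^ (Fintype.card ι + 1))⁻¹) r (hR := hr.le),
          Module.finrank_fintype_fun_eq_card, smul_eq_mul]

lemma le_inv_one_add_pow_of_le {z C D r : ℝ} {n : ℕ} (hr : 0 ≤ r) (hC : 0 ≤ C) (hD : 0 ≤ D)
    (hzC : z ≤ C) (hzD : r ≠ 0 → z ≤ D * (r ^ n)⁻¹) :
    z ≤ 2 ^ n * (C + D) * ((1 + r) ^ n)⁻¹ := by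
  rcases le_or_gt r 1 with hr1 | hr1
  · have h : 1 ≤ 2 ^ n * ((1 + r) ^ n)⁻¹ := by
      rw [← div_eq_mul_inv, ← div_pow]
      exact one_le_pow₀ ((one_le_div (by positivity)).2 (by linarith))
    calc z ≤ (C + D) * 1 := by linarith
      _ ≤ (C + D) * (2 ^ n * ((1 + r) ^ n)⁻¹) := by gcongr
      _ = _ := by ring
  · have hr0 : 0 < r := one_pos.trans hr1
    have h : (r ^ n)⁻¹ ≤ 2 ^ n * ((1 + r) ^ n)⁻¹ := by
      rw [← div_eq_mul_inv, ← div_pow, ← inv_pow]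
      gcongr
      rw [inv_le_comm₀ hr0 (by positivity), inv_div, div_le_iff₀ two_pos]
      linarith
    calc z ≤ D * (r ^ n)⁻¹ := hzD hr0.ne'
      _ ≤ (C + D) * (2 ^ n * ((1 + r) ^ n)⁻¹) := by gcongr; linarith
      _ = _ := by ring

lemma fderiv_differenceQuotient_apply {γ : (ι → ℝ) → ℝ} (hγ : Differentiable ℝ γ)
    (y k v : ι → ℝ) : fderiv ℝ (fun k => ‖y‖⁻¹ • (γ (k + y) - γ k)) k v =
      ‖y‖⁻¹ * (fderiv ℝ γ (k + y) v - fderiv ℝ γ k v) := by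
  have hshift : DifferentiableAt ℝ (fun k => γ (k + y)) k :=
    (hγ _).comp k (differentiableAt_id.add_const y)
  rw [fderiv_fun_const_smul (hshift.fun_sub (hγ k)), fderiv_fun_sub hshift (hγ k),
    fderiv_comp_add_right]
  rfl

namespace CnBounded

variable {n : ℕ} {W : P → ℝ} {a : P → (ι → ℝ) → ℂ}

lemma autocorrelation (ha : CnBounded n a W) :
    CnBounded n (fun (q : P × (ι → ℝ)) k => star (a q.1 k) * a q.1 (k + q.2))
      fun q => W q.1 ^ 2 := by
  have hstar := (ha.clm_comp (Complex.conjCLE : ℂ →L[ℝ] ℂ)).reindex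
    (Prod.fst : P × (ι → ℝ) → P)
  have hshift := (ha.reindex (Prod.fst : P × (ι → ℝ) → P)).translate Prod.snd
  have hW : (fun q : P × (ι → ℝ) => W q.1 ^ 2) = (W ∘ Prod.fst) * (W ∘ Prod.fst) :=
    funext fun q => sq (W q.1)
  exact hW ▸ hstar.smul hshift

/-- For a displacement `y`, the phase `γ(k + y) - γ(k)` is nonstationary at scale `τ‖y‖`. -/
lemma exists_norm_oscInt_autocorrelation_le_inv_pow (ha : CnBounded n a W)
    (hap : ∀ p, TorusPeriodic (a p)) {γ : (ι → ℝ) → ℝ} (hγ : ContDiff ℝ (n + 2 : ℕ) γ)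
    (hγp : TorusPeriodic γ) {K : Set (ι → ℝ)} {c : ℝ} (hc : 0 < c)
    (hK : SeparatesGradient γ K c) (haK : ∀ p k, a p k ≠ 0 → k ∈ K) :
    ∃ C > 0, ∀ p, ∀ y ∈ torusCell ι, ∀ τ : ℝ, |τ| • y ≠ 0 →
      ‖oscInt τ (fun k => γ (k + y) - γ k) fun k => star (a p k) * a p (k + y)‖ ≤
        C * W p ^ 2 * (‖|τ| • y‖ ^ n)⁻¹ := by
  choose v hv1 hv using hK
  let D := {y : ι → ℝ // ‖y‖ ≤ π ∧ y ≠ 0}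
  have hcorr := ha.autocorrelation.reindex fun q : P × D => (q.1, (q.2 : ι → ℝ))
  have hphase : CnBounded (n + 1)
      (fun (q : P × D) k => ‖(q.2 : ι → ℝ)‖⁻¹ • (γ (k + q.2) - γ k)) 1 :=
    (differenceQuotient (of_periodic hγ hγp)).reindex fun q : P × D => (q.2 : ι → ℝ)
  obtain ⟨C, hC, hfar⟩ := hphase.exists_norm_oscInt_le_of_nonstationary
    (fun q => (hγp.translate _).comp₂ hγp fun r s => ‖(q.2 : ι → ℝ)‖⁻¹ • (r - s))
    (v := fun q => v q.2 q.2.2.1) (fun q => hv1 q.2 q.2.2.1) hc hcorr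
    (fun q => (hap q.1).comp₂ ((hap q.1).translate _) fun z w => star z * w)
    fun q k hk => by
      have hy : 0 < ‖(q.2 : ι → ℝ)‖ := norm_pos_iff.2 q.2.2.2
      have hsep := hv q.2 q.2.2.1 k (haK _ _ (star_ne_zero.1 (left_ne_zero_of_mul hk)))
        (haK _ _ (right_ne_zero_of_mul hk))
      rw [fderiv_differenceQuotient_apply (hγ.differentiable (by simp)), abs_mul, abs_inv, abs_norm]
      rwa [le_inv_mul_iff₀ hy, mul_comm]
  refine ⟨C, hC, fun p y hy τ hτy => ?_⟩
  have hτ := abs_ne_zero.1 (left_ne_zero_of_smul hτy)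
  have hy0 := right_ne_zero_of_smul hτy
  have hy' := norm_ne_zero_iff.2 hy0
  have hscale : oscInt τ (fun k => γ (k + y) - γ k) (fun k => star (a p k) * a p (k + y)) =
      oscInt (τ * ‖y‖) (fun k => ‖y‖⁻¹ • (γ (k + y) - γ k))
        fun k => star (a p k) * a p (k + y) := by
    simp only [oscInt, smul_eq_mul, mul_assoc, mul_inv_cancel_left₀ hy']
  rw [hscale]
  simpa [norm_smul, abs_mul] using
    hfar (p, ⟨y, norm_le_pi_of_mem_torusCell hy, hy0⟩) (τ * ‖y‖) (mul_ne_zero hτ hy')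

lemma exists_norm_oscInt_autocorrelation_le (ha : CnBounded n a W)
    (hap : ∀ p, TorusPeriodic (a p)) {γ : (ι → ℝ) → ℝ} (hγ : ContDiff ℝ (n + 2 : ℕ) γ)
    (hγp : TorusPeriodic γ) {K : Set (ι → ℝ)} {c : ℝ} (hc : 0 < c)
    (hK : SeparatesGradient γ K c) (haK : ∀ p k, a p k ≠ 0 → k ∈ K) :
    ∃ C > 0, ∀ p, ∀ y ∈ torusCell ι, ∀ τ : ℝ,
      ‖oscInt τ (fun k => γ (k + y) - γ k) fun k => star (a p k) * a p (k + y)‖ ≤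
        C * W p ^ 2 * ((1 + ‖|τ| • y‖) ^ n)⁻¹ := by
  obtain ⟨C₁, hC₁, hnear⟩ := ha.autocorrelation.exists_norm_le
  obtain ⟨C₂, hC₂, hfar⟩ :=
    ha.exists_norm_oscInt_autocorrelation_le_inv_pow hap hγ hγp hc hK haK
  refine ⟨2 ^ n * (C₁ * (volume.real (torusCell ι) + 1) + C₂), by positivity,
    fun p y hy τ => ?_⟩
  have hW := sq_nonneg (W p)
  have hnear' : ‖oscInt τ (fun k => γ (k + y) - γ k) fun k => star (a p k) * a p (k + y)‖ ≤
      C₁ * W p ^ 2 * (volume.real (torusCell ι) + 1) := by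
    refine (norm_oscInt_le (hnear (p, y))).trans ?_
    gcongr
    simp
  refine (le_inv_one_add_pow_of_le (norm_nonneg (|τ| • y)) (by positivity)
    (mul_nonneg hC₂.le hW) hnear' fun hr => hfar p y hy τ (norm_ne_zero_iff.1 hr)).trans_eq ?_
  ring

/-- The square of the integral is an integral over displacements `y`, which the decay in `|τ|‖y‖`
localizes to a ball of volume `|τ|^{-d}`. -/
theorem exists_norm_oscInt_le_of_separatesGradient (ha : CnBounded (Fintype.card ι + 1) a W)
    (hap : ∀ p, TorusPeriodic (a p)) {γ : (ι → ℝ) → ℝ}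
    (hγ : ContDiff ℝ (Fintype.card ι + 3 : ℕ) γ) (hγp : TorusPeriodic γ) {K : Set (ι → ℝ)} {c : ℝ}
    (hc : 0 < c) (hK : SeparatesGradient γ K c) (haK : ∀ p k, a p k ≠ 0 → k ∈ K) :
    ∃ C > 0, ∀ p, ∀ τ ≠ 0, ‖oscInt τ γ (a p)‖ ≤ C * W p / |τ| ^ ((Fintype.card ι : ℝ) / 2) := by
  obtain ⟨C, hC, hb⟩ := ha.exists_norm_oscInt_autocorrelation_le hap hγ hγp hc hK haK
  set J := ∫ y : ι → ℝ, ((1 + ‖y‖) ^ (Fintype.card ι + 1))⁻¹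
  have : 0 ≤ J := integral_nonneg fun y => by positivity
  refine ⟨√(C * (J + 1)), by positivity, fun p τ hτ => ?_⟩
  have hτ' : 0 < |τ| := abs_pos.2 hτ
  have hW := ha.weight_nonneg p
  refine (sq_le_sq₀ (norm_nonneg _) (by positivity)).1 ?_
  calc ‖oscInt τ γ (a p)‖ ^ 2
      ≤ ∫ y in torusCell ι, C * W p ^ 2 * ((1 + ‖|τ| • y‖) ^ (Fintype.card ι + 1))⁻¹ := by
        rw [norm_oscInt_sq_eq hγ.continuous hγp (ha.1 p).continuous (hap p)]
        refine norm_integral_le_of_norm_le ?_ ?_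
        · exact (((integrable_comp_smul_iff volume _ hτ'.ne').2
            integrable_inv_one_add_norm_pow).const_mul _).integrableOn
        · exact ae_restrict_of_forall_mem measurableSet_torusCell fun y hy => hb p y hy τ
    _ ≤ C * W p ^ 2 * ((|τ| ^ Fintype.card ι)⁻¹ * (J + 1)) := by
        rw [integral_const_mul]
        gcongr
        refine (setIntegral_inv_one_add_norm_smul_pow_le hτ' _).trans ?_
        gcongr
        linarith
    _ = (√(C * (J + 1)) * W p / |τ| ^ ((Fintype.card ι : ℝ) / 2)) ^ 2 := by
        rw [div_pow, mul_pow, sq_sqrt (by positivity), ← rpow_natCast (|τ| ^ _), ← rpow_mul hτ'.le,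
          Nat.cast_two, div_mul_cancel₀ _ two_ne_zero, rpow_natCast]
        ring

end CnBounded

end StationaryPhase

section Gain

variable {ι P : Type*} [Fintype ι]

/-- On the support of `a` a factor `∂_v γ` is worth one more power of `τ`, by one integration by
parts. -/
theorem CnBounded.exists_norm_oscInt_fderiv_smul_le_of_separatesGradient {W : P → ℝ}
    {a : P → (ι → ℝ) → ℂ} (ha : CnBounded (Fintype.card ι + 2) a W)
    (hap : ∀ p, TorusPeriodic (a p)) {γ : (ι → ℝ) → ℝ}
    (hγ : ContDiff ℝ (Fintype.card ι + 3 : ℕ) γ) (hγp : TorusPeriodic γ) {K : Set (ι → ℝ)} {c : ℝ}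
    (hc : 0 < c) (hK : SeparatesGradient γ K c) (hKc : IsClosed K)
    (haK : ∀ p k, a p k ≠ 0 → k ∈ K) {v : ι → ℝ} (hv : ‖v‖ ≤ 1) :
    ∃ C > 0, ∀ p, ∀ τ ≠ 0, ‖oscInt τ γ fun k => fderiv ℝ γ k v • a p k‖ ≤
      C * W p / |τ| ^ ((Fintype.card ι : ℝ) / 2 + 1) := by
  have hderiv_supp (p : P) (k : ι → ℝ) (hk : fderiv ℝ (a p) k v ≠ 0) : k ∈ K := by
    contrapose! hk
    rw [fderiv_eq_zero_of_isOpen_of_forall_eq_zero hKc.isOpen_compl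
      (fun k hk => of_not_not (mt (haK p k) hk)) hk, zero_apply]
  obtain ⟨C, hC, hb⟩ := (ha.fderiv_apply fun _ => hv).exists_norm_oscInt_le_of_separatesGradient
    (fun p => (hap p).fderiv_apply v) hγ hγp hc hK hderiv_supp
  refine ⟨C, hC, fun p τ hτ => ?_⟩
  have hone {m : ℕ} : ((1 : ℕ) : WithTop ℕ∞) ≤ (m + 1 : ℕ) := mod_cast Nat.le_add_left 1 m
  have hτ' := abs_pos.2 hτ
  rw [oscInt_fderiv_phase_smul hτ (hγ.of_le (mod_cast hone)) hγp ((ha.1 p).of_le (mod_cast hone))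
    (hap p)]
  calc ‖Complex.I / τ * oscInt τ γ fun k => fderiv ℝ (a p) k v‖
      ≤ |τ|⁻¹ * (C * W p / |τ| ^ ((Fintype.card ι : ℝ) / 2)) := by
        rw [norm_mul, norm_div, Complex.norm_I, Complex.norm_real, one_div, norm_eq_abs]
        gcongr
        exact hb p τ hτ
    _ = C * W p / |τ| ^ ((Fintype.card ι : ℝ) / 2 + 1) := by
        rw [rpow_add_one hτ'.ne']
        field_simp

end Gain

section GradientContraction

variable {ι P : Type*} [Fintype ι] [DecidableEq ι]

/-- A smooth deformation of `K`, modulo the period lattice, to the point `p`, whose velocity at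
time `s` through the trajectory of `k` has the coordinates `∂ⱼγ(k) rⱼ(s, k)`. It serves to divide
`b - b(p)` by the gradient of `γ` on `K`. -/
structure GradientContraction (γ : (ι → ℝ) → ℝ) (K : Set (ι → ℝ)) (p : ι → ℝ) where
  flow : ℝ → (ι → ℝ) → ι → ℝ
  rate : ι → ℝ → (ι → ℝ) → ℝ
  contDiff_flow : ContDiff ℝ (⊤ : ℕ∞) (Function.uncurry flow)
  contDiff_rate : ∀ j, ContDiff ℝ (⊤ : ℕ∞) (Function.uncurry (rate j))
  flow_periodic : ∀ s, TorusPeriodic (flow s)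
  rate_periodic : ∀ j s, TorusPeriodic (rate j s)
  flow_zero : ∀ k, flow 0 k = p
  flow_one : ∀ k ∈ K, flow 1 k - k ∈ torusLattice ι
  hasDerivAt_flow : ∀ s k j,
    HasDerivAt (fun s => flow s k j) (fderiv ℝ γ k (Pi.single j 1) * rate j s k) s

namespace GradientContraction

variable {γ : (ι → ℝ) → ℝ} {K : Set (ι → ℝ)} {p : ι → ℝ} (Φ : GradientContraction γ K p)

/-- The amplitude multiplying `∂ⱼγ` at time `s` when `w (b - b(p))` is expanded along the
contraction. -/
noncomputable def amplitude (w : (ι → ℝ) → ℝ) (b : (ι → ℝ) → ℂ) (j : ι) (s : ℝ) (k : ι → ℝ) : ℂ :=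
  (w k * Φ.rate j s k) • fderiv ℝ b (Φ.flow s k) (Pi.single j 1)

lemma continuous_amplitude {w : (ι → ℝ) → ℝ} {b : (ι → ℝ) → ℂ} (hw : Continuous w)
    (hb : ContDiff ℝ 1 b) (j : ι) : Continuous (Function.uncurry (Φ.amplitude w b j)) :=
  ((hw.comp continuous_snd).mul (Φ.contDiff_rate j).continuous).smul
    (((hb.continuous_fderiv one_ne_zero).comp Φ.contDiff_flow.continuous).clm_apply
      continuous_const)

lemma periodic_amplitude {w : (ι → ℝ) → ℝ} (hw : TorusPeriodic w) (b : (ι → ℝ) → ℂ) (j : ι)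
    (s : ℝ) : TorusPeriodic (Φ.amplitude w b j s) :=
  (hw.comp₂ (Φ.rate_periodic j s) (· * ·)).comp₂ (Φ.flow_periodic s)
    fun r x => r • fderiv ℝ b x (Pi.single j 1)

lemma cnBounded_amplitude {n : ℕ} {w : (ι → ℝ) → ℝ} (hw : ContDiff ℝ n w) (hwp : TorusPeriodic w)
    {b : P → (ι → ℝ) → ℂ} {W : P → ℝ} (hb : CnBounded (n + 1) b W) (j : ι) :
    CnBounded n (fun q : P × Set.Icc (0 : ℝ) 1 => Φ.amplitude w (b q.1) j q.2)
      fun q => W q.1 := by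
  have hflow : CnBounded n (fun q : P × Set.Icc (0 : ℝ) 1 => Φ.flow q.2) 1 :=
    (CnBounded.of_periodic_uncurry isCompact_Icc (Φ.contDiff_flow.of_le (mod_cast le_top))
      fun s _ => Φ.flow_periodic s).reindex Prod.snd
  have hrate : CnBounded n (fun q : P × Set.Icc (0 : ℝ) 1 => Φ.rate j q.2) 1 :=
    (CnBounded.of_periodic_uncurry isCompact_Icc ((Φ.contDiff_rate j).of_le (mod_cast le_top))
      fun s _ => Φ.rate_periodic j s).reindex Prod.snd
  have hcoeff := (CnBounded.of_periodic (P := P × Set.Icc (0 : ℝ) 1) hw hwp).smul hrate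
  have hunit : ‖(Pi.single j 1 : ι → ℝ)‖ ≤ 1 := (Pi.norm_single _).trans_le norm_one.le
  have hderiv := (hb.fderiv_apply fun _ => hunit).reindex
    (Prod.fst : P × Set.Icc (0 : ℝ) 1 → P)
  simpa only [mul_one, one_mul, smul_eq_mul] using! hcoeff.smul (hderiv.comp hflow)

lemma sub_eq_setIntegral {b : (ι → ℝ) → ℂ} (hb : ContDiff ℝ 1 b) (hbp : TorusPeriodic b)
    {k : ι → ℝ} (hk : k ∈ K) : b k - b p = ∫ s in Set.Ioc (0 : ℝ) 1, ∑ j,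
      fderiv ℝ γ k (Pi.single j 1) • Φ.amplitude 1 b j s k := by
  have hderiv (s : ℝ) : HasDerivAt (fun s => b (Φ.flow s k))
      (∑ j, fderiv ℝ γ k (Pi.single j 1) • Φ.amplitude 1 b j s k) s := by
    have hflow := hasDerivAt_pi.2 fun j => Φ.hasDerivAt_flow s k j
    refine ((hb.differentiable one_ne_zero _).hasFDerivAt.comp_hasDerivAt s hflow).congr_deriv ?_
    rw [pi_eq_sum_univ' fun j => fderiv ℝ γ k (Pi.single j 1) * Φ.rate j s k, map_sum]
    simp only [map_smul, mul_smul, amplitude, Pi.one_apply, one_mul]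
  have hcont : Continuous fun s => ∑ j, fderiv ℝ γ k (Pi.single j 1) • Φ.amplitude 1 b j s k :=
    continuous_finsetSum _ fun j _ => continuous_const.fun_smul
      ((Φ.continuous_amplitude continuous_one hb j).comp (Continuous.prodMk_left k))
  have hend : b (Φ.flow 1 k) = b k := by
    rw [← hbp _ (Φ.flow_one k hk) k, add_sub_cancel]
  rw [← intervalIntegral.integral_of_le zero_le_one,
    intervalIntegral.integral_eq_sub_of_hasDerivAt (fun s _ => hderiv s)
      (hcont.intervalIntegrable 0 1), hend, Φ.flow_zero]

lemma smul_sub_eq_setIntegral {w : (ι → ℝ) → ℝ} (hwK : ∀ k, w k ≠ 0 → k ∈ K)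
    {b : (ι → ℝ) → ℂ} (hb : ContDiff ℝ 1 b) (hbp : TorusPeriodic b) (k : ι → ℝ) :
    w k • (b k - b p) = ∫ s in Set.Ioc (0 : ℝ) 1,
      ∑ j, fderiv ℝ γ k (Pi.single j 1) • Φ.amplitude w b j s k := by
  by_cases hk : w k = 0
  · simp [amplitude, hk]
  · rw [Φ.sub_eq_setIntegral hb hbp (hwK k hk), ← integral_smul]
    simp only [amplitude, Finset.smul_sum, smul_smul, Pi.one_apply, one_mul, mul_left_comm]

lemma oscInt_smul_sub_eq_setIntegral (τ : ℝ) (hγ : ContDiff ℝ 1 γ) {w : (ι → ℝ) → ℝ}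
    (hw : Continuous w) (hwK : ∀ k, w k ≠ 0 → k ∈ K) {b : (ι → ℝ) → ℂ} (hb : ContDiff ℝ 1 b)
    (hbp : TorusPeriodic b) :
    oscInt τ γ (fun k => w k • b k) - b p * oscInt τ γ (fun k => (w k : ℂ)) =
      ∫ s in Set.Ioc (0 : ℝ) 1, ∑ j,
        oscInt τ γ fun k => fderiv ℝ γ k (Pi.single j 1) • Φ.amplitude w b j s k := by
  have hterm (j : ι) : Continuous fun q : ℝ × (ι → ℝ) =>
      fderiv ℝ γ q.2 (Pi.single j 1) • Φ.amplitude w b j q.1 q.2 :=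
    (((hγ.continuous_fderiv one_ne_zero).comp continuous_snd).clm_apply continuous_const).smul
      (Φ.continuous_amplitude hw hb j)
  have hslice (j : ι) (s : ℝ) := integrableOn_torusCell (continuous_exp_phase_mul (τ := τ)
    hγ.continuous ((hterm j).comp (Continuous.prodMk_right s)))
  calc oscInt τ γ (fun k => w k • b k) - b p * oscInt τ γ (fun k => (w k : ℂ))
      = oscInt τ γ fun k => w k • (b k - b p) :=
        (oscInt_smul_sub_const τ hγ.continuous hw hb.continuous (b p)).symm
    _ = ∫ s in Set.Ioc (0 : ℝ) 1, oscInt τ γ fun k =>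
          ∑ j, fderiv ℝ γ k (Pi.single j 1) • Φ.amplitude w b j s k := by
        simp_rw [Φ.smul_sub_eq_setIntegral hwK hb hbp, oscInt, ← integral_const_mul]
        refine setIntegral_swap_of_continuous ?_ isCompact_Icc torusCell_subset_Icc isCompact_Icc
          Set.Ioc_subset_Icc_self
        exact continuous_exp_phase_mul (ψ := fun q : (ι → ℝ) × ℝ => γ q.1)
          (hγ.continuous.comp continuous_fst)
          ((continuous_finsetSum _ fun j _ => hterm j).comp continuous_swap)
    _ = _ := by
        simp_rw [oscInt, Finset.mul_sum]
        exact setIntegral_congr_fun measurableSet_Ioc fun s _ =>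
          integral_finsetSum _ fun j _ => hslice j s

/-- Replacing `b` by its value at the critical point gains a full power of `τ`. -/
theorem exists_norm_oscInt_smul_sub_le (Φ : GradientContraction γ K p)
    (hγ : ContDiff ℝ (Fintype.card ι + 3 : ℕ) γ) (hγp : TorusPeriodic γ) {c : ℝ} (hc : 0 < c)
    (hK : SeparatesGradient γ K c) (hKc : IsClosed K) {w : (ι → ℝ) → ℝ}
    (hw : ContDiff ℝ (Fintype.card ι + 2 : ℕ) w) (hwp : TorusPeriodic w)
    (hwK : ∀ k, w k ≠ 0 → k ∈ K) {b : P → (ι → ℝ) → ℂ} {W : P → ℝ}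
    (hb : CnBounded (Fintype.card ι + 3) b W) (hbp : ∀ q, TorusPeriodic (b q)) :
    ∃ C ≥ 0, ∀ q, ∀ τ ≠ 0,
      ‖oscInt τ γ (fun k => w k • b q k) - b q p * oscInt τ γ (fun k => (w k : ℂ))‖ ≤
        C * W q / |τ| ^ ((Fintype.card ι : ℝ) / 2 + 1) := by
  have hgain (j : ι) := (Φ.cnBounded_amplitude hw hwp hb j)
    |>.exists_norm_oscInt_fderiv_smul_le_of_separatesGradient
      (fun q => Φ.periodic_amplitude hwp (b q.1) j q.2) hγ hγp hc hK hKc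
      (fun q k hk => hwK k (left_ne_zero_of_mul (left_ne_zero_of_smul hk)))
      (v := Pi.single j 1) ((Pi.norm_single _).trans_le norm_one.le)
  choose C hC hbound using hgain
  refine ⟨∑ j, C j, Finset.sum_nonneg fun j _ => (hC j).le, fun q τ hτ => ?_⟩
  have hone {m : ℕ} : ((1 : ℕ) : WithTop ℕ∞) ≤ (m + 1 : ℕ) := mod_cast Nat.le_add_left 1 m
  rw [Φ.oscInt_smul_sub_eq_setIntegral τ (hγ.of_le (mod_cast hone)) hw.continuous hwK
    ((hb.1 q).of_le (mod_cast hone)) (hbp q)]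
  calc _ ≤ (∑ j, C j * W q / |τ| ^ ((Fintype.card ι : ℝ) / 2 + 1)) *
        volume.real (Set.Ioc (0 : ℝ) 1) :=
        norm_setIntegral_le_of_norm_le_const measure_Ioc_lt_top fun s hs =>
          norm_sum_le_of_le _ fun j _ => hbound j (q, ⟨s, Set.Ioc_subset_Icc_self hs⟩) τ hτ
    _ = (∑ j, C j) * W q / |τ| ^ ((Fintype.card ι : ℝ) / 2 + 1) := by
        simp [Finset.sum_mul, Finset.sum_div]

lemma exists_norm_oscInt_smul_le (Φ : GradientContraction γ K p)
    (hγ : ContDiff ℝ (Fintype.card ι + 3 : ℕ) γ) (hγp : TorusPeriodic γ) {c : ℝ} (hc : 0 < c)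
    (hK : SeparatesGradient γ K c) (hKc : IsClosed K) {w : (ι → ℝ) → ℝ}
    (hw : ContDiff ℝ (Fintype.card ι + 2 : ℕ) w) (hwp : TorusPeriodic w)
    (hwK : ∀ k, w k ≠ 0 → k ∈ K) {b : P → (ι → ℝ) → ℂ} {W : P → ℝ}
    (hb : CnBounded (Fintype.card ι + 3) b W) (hbp : ∀ q, TorusPeriodic (b q)) :
    ∃ C ≥ 0, ∀ q, ∀ τ ≠ 0, ‖oscInt τ γ fun k => w k • b q k‖ ≤
      C * (‖b q p‖ / |τ| ^ ((Fintype.card ι : ℝ) / 2) +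
        W q / |τ| ^ ((Fintype.card ι : ℝ) / 2 + 1)) := by
  have hwb : CnBounded (Fintype.card ι + 1) (fun _ : Unit => fun k => (w k : ℂ)) 1 :=
    ((CnBounded.of_periodic hw hwp).of_le (by lia)).clm_comp Complex.ofRealCLM
  obtain ⟨C₁, hC₁, hlead⟩ := hwb.exists_norm_oscInt_le_of_separatesGradient
    (fun _ => hwp.comp_left _) hγ hγp hc hK fun _ k hk => hwK k (Complex.ofReal_ne_zero.1 hk)
  obtain ⟨C₂, hC₂, hrest⟩ := Φ.exists_norm_oscInt_smul_sub_le hγ hγp hc hK hKc hw hwp hwK hb hbp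
  refine ⟨C₁ + C₂, by positivity, fun q τ hτ => ?_⟩
  have hW := hb.weight_nonneg q
  set T := oscInt τ γ fun k => (w k : ℂ)
  calc ‖oscInt τ γ fun k => w k • b q k‖
      ≤ ‖b q p * T‖ + ‖oscInt τ γ (fun k => w k • b q k) - b q p * T‖ :=
        norm_le_norm_add_norm_sub' _ _
    _ ≤ ‖b q p‖ * (C₁ * (1 : Unit → ℝ) () / |τ| ^ ((Fintype.card ι : ℝ) / 2)) +
          C₂ * W q / |τ| ^ ((Fintype.card ι : ℝ) / 2 + 1) := by
        rw [norm_mul]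
        gcongr
        exacts [hlead () τ hτ, hrest q τ hτ]
    _ = C₁ * (‖b q p‖ / |τ| ^ ((Fintype.card ι : ℝ) / 2)) +
          C₂ * (W q / |τ| ^ ((Fintype.card ι : ℝ) / 2 + 1)) := by
        rw [Pi.one_apply]
        ring
    _ ≤ (C₁ + C₂) * (‖b q p‖ / |τ| ^ ((Fintype.card ι : ℝ) / 2)) +
          (C₁ + C₂) * (W q / |τ| ^ ((Fintype.card ι : ℝ) / 2 + 1)) := by
        gcongr <;> linarith
    _ = _ := (mul_add _ _ _).symm

end GradientContraction

end GradientContraction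

section Dispersion

lemma TorusPeriodic.exists_norm_sub_le {ι G : Type*} [Fintype ι] [NormedAddCommGroup G]
    [NormedSpace ℝ G] {F : (ι → ℝ) → G} (hF : TorusPeriodic F) (hs : ContDiff ℝ 1 F) :
    ∃ L, ∀ k k', ‖F k' - F k‖ ≤ L * ‖k' - k‖ := by
  obtain ⟨L, hL⟩ := hF.fderiv.exists_norm_le (hs.continuous_fderiv one_ne_zero)
  exact ⟨L, fun k k' => convex_univ.norm_image_sub_le_of_norm_fderiv_le
    (fun k _ => hs.differentiable one_ne_zero k) (fun k _ => hL k) (Set.mem_univ k)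
    (Set.mem_univ k')⟩

lemma torusPeriodic_sin {ι : Type*} (j : ι) : TorusPeriodic fun k => sin (k j) := fun g hg k => by
  obtain ⟨n, hn⟩ := mem_torusLattice.1 hg j
  change sin (k j + g j) = sin (k j)
  rw [hn, sin_add_int_mul_two_pi]

lemma torusPeriodic_cos {ι : Type*} (j : ι) : TorusPeriodic fun k => cos (k j) := fun g hg k => by
  obtain ⟨n, hn⟩ := mem_torusLattice.1 hg j
  change cos (k j + g j) = cos (k j)
  rw [hn, cos_add_int_mul_two_pi]

/-- The points of the torus at which every coordinate is close to that of `p`. -/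
def torusNhd {ι : Type*} (p : ι → ℝ) (c₀ : ℝ) : Set (ι → ℝ) := {k | ∀ j, c₀ ≤ cos (k j - p j)}

lemma isClosed_torusNhd {ι : Type*} (p : ι → ℝ) (c₀ : ℝ) : IsClosed (torusNhd p c₀) := by
  simp only [torusNhd, Set.ofPred_forall]
  exact isClosed_iInter fun j => isClosed_le continuous_const (by fun_prop)

variable {ι : Type*} [Fintype ι] {ω : ℝ} {lam : ι → ℝ}

/-- The dispersion relation `γ` of the harmonic lattice with pinning frequency `ω` and couplings
`lam`. -/
noncomputable def dispersion (ω : ℝ) (lam : ι → ℝ) (k : ι → ℝ) : ℝ :=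
  √(ω ^ 2 + 4 * ∑ j, lam j * sin (k j / 2) ^ 2)

lemma dispersion_eq_sqrt_cos (ω : ℝ) (lam : ι → ℝ) :
    dispersion ω lam = fun k => √(ω ^ 2 + 2 * ∑ j, lam j * (1 - cos (k j))) := by
  funext k
  have hterm (j : ι) : 4 * (lam j * sin (k j / 2) ^ 2) = 2 * (lam j * (1 - cos (k j))) := by
    rw [sin_sq_eq_half_sub, mul_div_cancel₀ (k j) two_ne_zero]
    ring
  simp only [dispersion, Finset.mul_sum, hterm]

lemma sq_le_dispersion_radicand (hlam : ∀ j, 0 ≤ lam j) (k : ι → ℝ) :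
    ω ^ 2 ≤ ω ^ 2 + 2 * ∑ j, lam j * (1 - cos (k j)) :=
  le_add_of_nonneg_right (mul_nonneg zero_le_two (Finset.sum_nonneg fun j _ =>
    mul_nonneg (hlam j) (sub_nonneg.2 (cos_le_one _))))

lemma le_dispersion (hlam : ∀ j, 0 ≤ lam j) (k : ι → ℝ) : ω ≤ dispersion ω lam k := by
  rw [dispersion_eq_sqrt_cos]
  exact le_sqrt_of_sq_le (sq_le_dispersion_radicand hlam k)

lemma torusPeriodic_dispersion (ω : ℝ) (lam : ι → ℝ) : TorusPeriodic (dispersion ω lam) := by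
  rw [dispersion_eq_sqrt_cos]
  have hcos : TorusPeriodic fun (k : ι → ℝ) j => cos (k j) := fun g hg k =>
    funext fun j => torusPeriodic_cos j g hg k
  exact hcos.comp_left fun c => √(ω ^ 2 + 2 * ∑ j, lam j * (1 - c j))

lemma contDiff_dispersion {n : WithTop ℕ∞} (hω : 0 < ω) (hlam : ∀ j, 0 ≤ lam j) :
    ContDiff ℝ n (dispersion ω lam) := by
  rw [dispersion_eq_sqrt_cos]
  exact (contDiff_const.add (contDiff_const.mul (ContDiff.sum fun j _ => contDiff_const.mul
    (contDiff_const.sub (contDiff_cos.comp (contDiff_apply ℝ ℝ j)))))).sqrt fun k =>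
      ((pow_pos hω 2).trans_le (sq_le_dispersion_radicand hlam k)).ne'

lemma fderiv_dispersion_apply_single [DecidableEq ι] (hω : 0 < ω) (hlam : ∀ j, 0 ≤ lam j)
    (k : ι → ℝ) (j : ι) : fderiv ℝ (dispersion ω lam) k (Pi.single j 1) =
      lam j * sin (k j) / dispersion ω lam k := by
  have hsum := HasFDerivAt.fun_sum (u := Finset.univ) fun i _ =>
    (((hasFDerivAt_apply (𝕜 := ℝ) i k).cos).const_sub 1).const_mul (lam i)
  have hsqrt := ((hsum.const_mul 2).const_add (ω ^ 2)).sqrt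
    ((pow_pos hω 2).trans_le (sq_le_dispersion_radicand hlam k)).ne'
  rw [dispersion_eq_sqrt_cos, hsqrt.fderiv]
  simp [Pi.single_apply]
  ring

lemma abs_sub_div_four_le_abs_sin_sub_sin {u u' : ℝ} (hu : 1 / 2 ≤ cos u) (hu' : 1 / 2 ≤ cos u')
    (h : |u - u'| ≤ π) : |u - u'| / 4 ≤ |sin u - sin u'| := by
  have hsin : |u - u'| / 4 ≤ |sin ((u - u') / 2)| := by
    have habs : |(u - u') / 2| = |u - u'| / 2 := by rw [abs_div, abs_two]
    have hjordan := mul_abs_le_abs_sin (x := (u - u') / 2) (by rw [habs]; linarith)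
    rw [habs] at hjordan
    have htwo : 1 / 2 ≤ 2 / π := by
      rw [div_le_div_iff₀ two_pos pi_pos]
      linarith [pi_le_four]
    nlinarith [abs_nonneg (u - u')]
  have hcos : 1 / 2 ≤ |cos ((u + u') / 2)| := by
    have hsum := cos_add_cos u u'
    have : 1 / 2 ≤ |cos ((u + u') / 2)| * |cos ((u - u') / 2)| := by
      rw [← abs_mul]
      exact le_trans (by linarith) (le_abs_self _)
    exact this.trans (mul_le_of_le_one_right (abs_nonneg _) (abs_cos_le_one _))
  calc |u - u'| / 4 ≤ 2 * |sin ((u - u') / 2)| * (1 / 2) := by linarith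
    _ ≤ 2 * |sin ((u - u') / 2)| * |cos ((u + u') / 2)| := by gcongr
    _ = |sin u - sin u'| := by rw [sin_sub_sin, abs_mul, abs_mul, abs_two]

lemma abs_sin_le_of_one_sub_le_cos {u δ : ℝ} (hδ : 0 ≤ δ) (hu : 1 - δ ^ 2 / 2 ≤ cos u) :
    |sin u| ≤ δ := by
  refine abs_le_of_sq_le_sq ?_ hδ
  nlinarith [sin_sq_add_cos_sq u, cos_le_one u]

lemma div_le_abs_div_sub_div {s s' g g' Γ L δ Y : ℝ} (hω : 0 < ω) (hg : ω ≤ g) (hg' : ω ≤ g')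
    (hΓ : g' ≤ Γ) (hs : Y / 4 ≤ |s' - s|) (hgg' : |g' - g| ≤ L * Y) (hδ : |s| ≤ δ)
    (hδL : δ * L = ω ^ 2 / (8 * Γ)) : Y / (8 * Γ) ≤ |s' / g' - s / g| := by
  have hg0 : 0 < g := hω.trans_le hg
  have hg0' : 0 < g' := hω.trans_le hg'
  have hΓ0 : 0 < Γ := hg0'.trans_le hΓ
  have hmain : Y / (4 * Γ) ≤ |(s' - s) / g'| := by
    rw [abs_div, abs_of_pos hg0', ← div_div]
    exact div_le_div₀ (abs_nonneg _) hs hg0' hΓ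
  have herror : |s * ((g' - g) / (g * g'))| ≤ Y / (8 * Γ) := by
    rw [abs_mul, abs_div, abs_of_pos (mul_pos hg0 hg0')]
    calc |s| * (|g' - g| / (g * g')) ≤ δ * (L * Y / (ω * ω)) := by
          have hLY : 0 ≤ L * Y := (abs_nonneg _).trans hgg'
          have hδ0 : 0 ≤ δ := (abs_nonneg _).trans hδ
          gcongr
      _ = δ * L * Y / ω ^ 2 := by ring
      _ = Y / (8 * Γ) := by
          rw [hδL]
          field_simp
  have hsplit : s' / g' - s / g = (s' - s) / g' - s * ((g' - g) / (g * g')) := by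
    field_simp
    ring
  have hhalf : Y / (4 * Γ) = Y / (8 * Γ) + Y / (8 * Γ) := by
    field_simp
    ring
  rw [hsplit]
  linarith [abs_sub_abs_le_abs_sub ((s' - s) / g') (s * ((g' - g) / (g * g')))]

lemma abs_cos_eq_one_of_sin_eq_zero {x : ℝ} (hx : sin x = 0) : |cos x| = 1 := by
  rw [abs_cos_eq_sqrt_one_sub_sin_sq, hx]
  simp

lemma sin_eq_sin_sub_mul_cos {p : ℝ} (hp : sin p = 0) (x : ℝ) : sin x = sin (x - p) * cos p := by
  conv_lhs => rw [← sub_add_cancel x p]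
  rw [sin_add, hp, mul_zero, add_zero]

lemma le_abs_fderiv_dispersion_sub [DecidableEq ι] (hω : 0 < ω) (hlam : ∀ j, 0 < lam j)
    {Γ L δ : ℝ} (hΓ : ∀ k, ‖dispersion ω lam k‖ ≤ Γ)
    (hL : ∀ k k', ‖dispersion ω lam k' - dispersion ω lam k‖ ≤ L * ‖k' - k‖) (hδ : 0 ≤ δ)
    (hδL : δ * L = ω ^ 2 / (8 * Γ)) {p k y : ι → ℝ} {j : ι} (hp : sin (p j) = 0)
    (hk : max (1 / 2) (1 - δ ^ 2 / 2) ≤ cos (k j - p j))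
    (hky : 1 / 2 ≤ cos ((k + y) j - p j)) (hyj : ‖y‖ = |y j|) (hy : ‖y‖ ≤ π) :
    lam j / (8 * Γ) * ‖y‖ ≤ |fderiv ℝ (dispersion ω lam) (k + y) (Pi.single j 1) -
      fderiv ℝ (dispersion ω lam) k (Pi.single j 1)| := by
  have hlam0 (i : ι) : 0 ≤ lam i := (hlam i).le
  have hpj := abs_cos_eq_one_of_sin_eq_zero hp
  have hdiff : (k + y) j - p j - (k j - p j) = y j := by
    rw [Pi.add_apply]
    ring
  have hsin : ‖y‖ / 4 ≤ |sin ((k + y) j) - sin (k j)| := by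
    rw [sin_eq_sin_sub_mul_cos hp ((k + y) j), sin_eq_sin_sub_mul_cos hp (k j), ← sub_mul, abs_mul,
      hpj, mul_one, hyj, ← hdiff]
    exact abs_sub_div_four_le_abs_sin_sub_sin hky ((le_max_left _ _).trans hk)
      (by rwa [hdiff, ← hyj])
  have hsmall : |sin (k j)| ≤ δ := by
    rw [sin_eq_sin_sub_mul_cos hp (k j), abs_mul, hpj, mul_one]
    exact abs_sin_le_of_one_sub_le_cos hδ ((le_max_right _ _).trans hk)
  have hlip := hL k (k + y)
  rw [add_sub_cancel_left] at hlip
  have hquot := div_le_abs_div_sub_div hω (le_dispersion hlam0 k) (le_dispersion hlam0 (k + y))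
    ((le_abs_self _).trans (hΓ _)) hsin hlip hsmall hδL
  rw [fderiv_dispersion_apply_single hω hlam0, fderiv_dispersion_apply_single hω hlam0,
    mul_div_assoc, mul_div_assoc, ← mul_sub, abs_mul, abs_of_pos (hlam j)]
  calc lam j / (8 * Γ) * ‖y‖ = lam j * (‖y‖ / (8 * Γ)) := by ring
    _ ≤ _ := by gcongr; exact hlam0 j

/-- Near a critical point the `j`th partial derivative separates points whose distance is attained
in the `j`th coordinate. -/
lemma exists_separatesGradient_dispersion (hω : 0 < ω) (hlam : ∀ j, 0 < lam j) :
    ∃ c₀ ∈ Set.Ioo (0 : ℝ) 1, ∃ c > 0, ∀ p : ι → ℝ, (∀ j, sin (p j) = 0) →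
      SeparatesGradient (dispersion ω lam) (torusNhd p c₀) c := by
  classical
  have hlam0 (j : ι) : 0 ≤ lam j := (hlam j).le
  have hper := torusPeriodic_dispersion ω lam
  have hsmooth : ContDiff ℝ 1 (dispersion ω lam) := contDiff_dispersion hω hlam0
  obtain ⟨Γ, hΓ⟩ := hper.exists_norm_le hsmooth.continuous
  obtain ⟨L₀, hL₀⟩ := hper.exists_norm_sub_le hsmooth
  set L := max L₀ 1
  have hL (k k' : ι → ℝ) : ‖dispersion ω lam k' - dispersion ω lam k‖ ≤ L * ‖k' - k‖ :=
    (hL₀ k k').trans (mul_le_mul_of_nonneg_right (le_max_left _ _) (norm_nonneg _))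
  have hL0 : 0 < L := one_pos.trans_le (le_max_right _ _)
  have hωΓ : ω ≤ Γ := (le_dispersion hlam0 0).trans ((le_abs_self _).trans (hΓ 0))
  have hΓ0 : 0 < Γ := hω.trans_le hωΓ
  set δ := ω ^ 2 / (8 * Γ) / L
  have hδ : 0 < δ := by positivity
  obtain ⟨l, hl, hlj⟩ : ∃ l > 0, ∀ j, l ≤ lam j := by
    cases isEmpty_or_nonempty ι with
    | inl _ => exact ⟨1, one_pos, isEmptyElim⟩
    | inr _ => exact (Finite.exists_min lam).imp' lam fun j hj => ⟨hlam j, hj⟩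
  refine ⟨max (1 / 2) (1 - δ ^ 2 / 2), ⟨by positivity, max_lt (by norm_num) (by nlinarith)⟩,
    l / (8 * Γ), by positivity, fun p hp y hy => ?_⟩
  cases isEmpty_or_nonempty ι with
  | inl _ => exact ⟨0, by simp, by simp [Subsingleton.elim y 0]⟩
  | inr _ =>
    obtain ⟨j, hj⟩ := Finite.exists_max fun j => ‖y j‖
    have hyj : ‖y‖ = |y j| := le_antisymm ((pi_norm_le_iff_of_nonneg (norm_nonneg _)).2 hj)
      (norm_le_pi_norm y j)
    refine ⟨Pi.single j 1, (Pi.norm_single _).trans_le norm_one.le, fun k hk hky => ?_⟩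
    calc l / (8 * Γ) * ‖y‖ ≤ lam j / (8 * Γ) * ‖y‖ := by gcongr; exact hlj j
      _ ≤ _ := le_abs_fderiv_dispersion_sub hω hlam hΓ hL hδ.le (div_mul_cancel₀ _ hL0.ne') (hp j)
        (hk j) ((le_max_left _ _).trans (hky j)) hyj hy

end Dispersion

section DispersionContraction

lemma exists_arctan_tan_sub_eq_int_mul_two_pi {u : ℝ} (hu : 0 < cos u) :
    ∃ n : ℤ, arctan (tan u) - u = n * (2 * π) := by
  have habs := abs_lt.1 ((Real.Angle.cos_pos_iff_abs_toReal_lt_pi_div_two (θ := u)).1 hu)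
  have harctan : arctan (tan u) = (u : Real.Angle).toReal := by
    rw [← Real.Angle.tan_coe, ← Real.Angle.tan_toReal, arctan_tan habs.1 habs.2]
  obtain ⟨n, hn⟩ := Real.Angle.angle_eq_iff_two_pi_dvd_sub.1
    (Real.Angle.coe_toReal (u : Real.Angle))
  exact ⟨n, by rw [harctan, hn, mul_comm]⟩

lemma exists_add_arctan_tan_sub_eq_int_mul_two_pi {x p : ℝ} (hp : sin p = 0)
    (hx : 0 < cos (x - p)) : ∃ n : ℤ, p + arctan (tan x) - x = n * (2 * π) := by
  obtain ⟨m, rfl⟩ := sin_eq_zero_iff.1 hp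
  obtain ⟨n, hn⟩ := exists_arctan_tan_sub_eq_int_mul_two_pi hx
  exact ⟨n, by rw [← hn, tan_sub_int_mul_pi]; ring⟩

lemma sin_mul_eq_tan {x r : ℝ} (h : r * cos x = 1) : sin x * r = tan x := by
  rw [tan_eq_sin_div_cos, eq_div_iff (right_ne_zero_of_mul_eq_one h), mul_assoc, h, mul_one]

lemma abs_cos_sub_eq_abs_cos {p : ℝ} (hp : sin p = 0) (x : ℝ) : |cos (x - p)| = |cos x| := by
  rw [cos_sub, hp, mul_zero, add_zero, abs_mul, abs_cos_eq_one_of_sin_eq_zero hp, mul_one]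

variable {ι : Type*} [Fintype ι] [DecidableEq ι] {ω : ℝ} {lam : ι → ℝ}

/-- Near a critical point, contract the tangents of the coordinates linearly: the velocity of
`s ↦ arctan (s tan x)` is a multiple of `sin x`, which is proportional to the partial derivative
of `γ`. -/
theorem nonempty_gradientContraction_dispersion (hω : 0 < ω) (hlam : ∀ j, 0 < lam j) {p : ι → ℝ}
    (hp : ∀ j, sin (p j) = 0) {c₀ : ℝ} (hc₀ : 0 < c₀) :
    Nonempty (GradientContraction (dispersion ω lam) (torusNhd p c₀) p) := by
  obtain ⟨h, hh, hinv⟩ := exists_contDiff_mul_eq_one_of_le_abs hc₀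
  have hlam0 (i : ι) : 0 ≤ lam i := (hlam i).le
  have hcos (j : ι) : ContDiff ℝ (⊤ : ℕ∞) fun q : ℝ × (ι → ℝ) => cos (q.2 j) := by fun_prop
  have hT (j : ι) : ContDiff ℝ (⊤ : ℕ∞) fun q : ℝ × (ι → ℝ) =>
      q.1 * (sin (q.2 j) * h (cos (q.2 j))) :=
    contDiff_fst.mul (ContDiff.mul (by fun_prop) (hh.comp (hcos j)))
  have hpos (x : ℝ) : 1 + x ^ 2 ≠ 0 := by positivity
  refine ⟨{
    flow := fun s k j => p j + arctan (s * (sin (k j) * h (cos (k j))))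
    rate := fun j s k => dispersion ω lam k * h (cos (k j)) /
      (lam j * (1 + (s * (sin (k j) * h (cos (k j)))) ^ 2))
    contDiff_flow := contDiff_pi.2 fun j => contDiff_const.add (contDiff_arctan.comp (hT j))
    contDiff_rate := fun j => ContDiff.fun_div
      (((contDiff_dispersion hω hlam0).comp contDiff_snd).mul (hh.comp (hcos j)))
      (contDiff_const.mul (contDiff_const.add ((hT j).pow 2)))
      fun q => mul_ne_zero (hlam j).ne' (hpos _)
    flow_periodic := fun s g hg k => funext fun j =>
      (torusPeriodic_sin j).comp₂ (torusPeriodic_cos j)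
        (fun x y => p j + arctan (s * (x * h y))) g hg k
    rate_periodic := fun j s => (torusPeriodic_dispersion ω lam).comp₂
      ((torusPeriodic_sin j).comp₂ (torusPeriodic_cos j) Prod.mk)
      fun r q => r * h q.2 / (lam j * (1 + (s * (q.1 * h q.2)) ^ 2))
    flow_zero := fun k => by simp
    flow_one := fun k hk => mem_torusLattice.2 fun j => ?_
    hasDerivAt_flow := fun s k j => ?_ }⟩
  · have hcosk : h (cos (k j)) * cos (k j) = 1 := hinv _ <|
      (hk j).trans ((le_abs_self _).trans_eq (abs_cos_sub_eq_abs_cos (hp j) _))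
    rw [Pi.sub_apply, one_mul, sin_mul_eq_tan hcosk]
    exact exists_add_arctan_tan_sub_eq_int_mul_two_pi (hp j) (hc₀.trans_le (hk j))
  · set T := sin (k j) * h (cos (k j)) with hTdef
    refine (((hasDerivAt_mul_const T).arctan).const_add (p j)).congr_deriv ?_
    have hγ : dispersion ω lam k ≠ 0 := (hω.trans_le (le_dispersion hlam0 k)).ne'
    have hlamj := (hlam j).ne'
    have := hpos (s * T)
    rw [fderiv_dispersion_apply_single hω hlam0]
    field_simp
    exact hTdef

end DispersionContraction

section Localization

/-- The critical points of the dispersion relation, modulo the period lattice, are the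
`criticalPoint σ` with `σ j = ±1`. -/
noncomputable def criticalPoint {ι : Type*} (σ : ι → SignType) (j : ι) : ℝ := arccos (σ j)

lemma cos_criticalPoint {ι : Type*} (σ : ι → SignType) (j : ι) : cos (criticalPoint σ j) = σ j := by
  have : (-1 : ℝ) ≤ σ j ∧ (σ j : ℝ) ≤ 1 := by cases σ j <;> norm_num
  exact cos_arccos this.1 this.2

lemma sin_criticalPoint {ι : Type*} {σ : ι → SignType} {j : ι} (hj : σ j ≠ 0) :
    sin (criticalPoint σ j) = 0 := by
  rw [sin_eq_zero_iff_cos_eq, cos_criticalPoint]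
  revert hj
  cases σ j <;> simp

lemma mem_torusNhd_criticalPoint {ι : Type*} {σ : ι → SignType} (hσ : ∀ j, σ j ≠ 0) {c₀ : ℝ}
    {k : ι → ℝ} (hk : ∀ j, c₀ ≤ σ j * cos (k j)) : k ∈ torusNhd (criticalPoint σ) c₀ := fun j => by
  rw [cos_sub, cos_criticalPoint, sin_criticalPoint (hσ j), mul_zero, add_zero, mul_comm]
  exact hk j

lemma exists_smooth_sign_partition {c₀ c₁ : ℝ} (hc₀ : 0 ≤ c₀) (hc : c₀ < c₁) :
    ∃ χ : SignType → ℝ → ℝ, (∀ σ, ContDiff ℝ (⊤ : ℕ∞) (χ σ)) ∧ (∀ x, ∑ σ, χ σ x = 1) ∧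
      (∀ σ ≠ 0, ∀ x, χ σ x ≠ 0 → c₀ < σ * x) ∧ ∀ x, χ 0 x ≠ 0 → |x| < c₁ := by
  set θ : ℝ → ℝ := fun x => smoothTransition ((x - c₀) / (c₁ - c₀))
  have hgap : 0 < c₁ - c₀ := sub_pos.2 hc
  have hθ : ContDiff ℝ (⊤ : ℕ∞) θ :=
    smoothTransition.contDiff.comp ((contDiff_id.sub contDiff_const).div_const _)
  have hzero (x : ℝ) (hx : x ≤ c₀) : θ x = 0 :=
    smoothTransition.zero_of_nonpos (div_nonpos_of_nonpos_of_nonneg (sub_nonpos.2 hx) hgap.le)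
  have hone (x : ℝ) (hx : c₁ ≤ x) : θ x = 1 :=
    smoothTransition.one_of_one_le ((one_le_div hgap).2 (sub_le_sub_right hx _))
  refine ⟨fun σ x => if σ = 0 then 1 - θ x - θ (-x) else θ (σ * x), fun σ => ?_, fun x => ?_,
    fun σ hσ x hx => ?_, fun x hx => ?_⟩
  · beta_reduce
    split_ifs
    · exact (contDiff_const.sub hθ).sub (hθ.comp contDiff_neg)
    · exact hθ.comp (contDiff_const.mul contDiff_id)
  · simp [SignType.univ_eq]
    ring
  · beta_reduce at hx
    rw [if_neg hσ] at hx
    exact not_le.1 fun hle => hx (hzero _ hle)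
  · contrapose! hx
    rw [if_pos rfl]
    rcases le_abs.1 hx with hpos | hneg
    · rw [hone x hpos, hzero (-x) (by linarith)]
      norm_num
    · rw [hone (-x) hneg, hzero x (by linarith)]
      norm_num

variable {ι P : Type*} [Fintype ι] {ω : ℝ} {lam : ι → ℝ}

lemma exists_torus_partition [DecidableEq ι] {c₀ c₁ : ℝ} (hc₀ : 0 ≤ c₀) (hc : c₀ < c₁) :
    ∃ w : (ι → SignType) → (ι → ℝ) → ℝ, (∀ σ, ContDiff ℝ (⊤ : ℕ∞) (w σ)) ∧
      (∀ σ, TorusPeriodic (w σ)) ∧ (∀ k, ∑ σ, w σ k = 1) ∧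
      (∀ σ j, σ j ≠ 0 → ∀ k, w σ k ≠ 0 → c₀ < σ j * cos (k j)) ∧
      ∀ σ j, σ j = 0 → ∀ k, w σ k ≠ 0 → |cos (k j)| < c₁ := by
  obtain ⟨χ, hχ, hsum, hsign, hzero⟩ := exists_smooth_sign_partition hc₀ hc
  have hfactor {σ : ι → SignType} {k : ι → ℝ} (hk : ∏ j, χ (σ j) (cos (k j)) ≠ 0) (j : ι) :
      χ (σ j) (cos (k j)) ≠ 0 := Finset.prod_ne_zero_iff.1 hk j (Finset.mem_univ j)
  refine ⟨fun σ k => ∏ j, χ (σ j) (cos (k j)), fun σ => ?_, fun σ g hg k => ?_, fun k => ?_,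
    fun σ j hj k hk => hsign _ hj _ (hfactor hk j), fun σ j hj k hk => hzero _ (hj ▸ hfactor hk j)⟩
  · exact contDiff_prod fun j _ => (hχ _).comp (contDiff_cos.comp (contDiff_apply ℝ ℝ j))
  · exact Finset.prod_congr rfl fun j _ => congrArg (χ (σ j)) (torusPeriodic_cos j g hg k)
  · have hexpand : ∏ j, ∑ σ, χ σ (cos (k j)) = ∑ σ : ι → SignType, ∏ j, χ (σ j) (cos (k j)) := by
      rw [Finset.prod_univ_sum, Fintype.piFinset_univ]
    simpa only [hsum, Finset.prod_const_one] using hexpand.symm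

variable {n : ℕ} {a : P → (ι → ℝ) → ℂ} {W : P → ℝ}

lemma exists_norm_oscInt_dispersion_le_of_le_abs_sin (hω : 0 < ω) (hlam : ∀ j, 0 < lam j)
    (ha : CnBounded n a W) (hap : ∀ q, TorusPeriodic (a q)) {j : ι} {δ : ℝ} (hδ : 0 < δ)
    (hsupp : ∀ q k, a q k ≠ 0 → δ ≤ |sin (k j)|) :
    ∃ C > 0, ∀ q τ, τ ≠ 0 → ‖oscInt τ (dispersion ω lam) (a q)‖ ≤ C * W q * (|τ| ^ n)⁻¹ := by
  classical
  have hlam0 (i : ι) : 0 ≤ lam i := (hlam i).le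
  have hsmooth {n : WithTop ℕ∞} : ContDiff ℝ n (dispersion ω lam) := contDiff_dispersion hω hlam0
  have hper := torusPeriodic_dispersion ω lam
  obtain ⟨Γ, hΓ⟩ := hper.exists_norm_le (hsmooth (n := 0)).continuous
  have hpos (k : ι → ℝ) : 0 < dispersion ω lam k := hω.trans_le (le_dispersion hlam0 k)
  have hle (k : ι → ℝ) : dispersion ω lam k ≤ Γ := (le_abs_self _).trans (hΓ k)
  have hΓ0 : 0 < Γ := (hpos 0).trans_le (hle 0)
  refine (CnBounded.of_periodic hsmooth hper).exists_norm_oscInt_le_of_nonstationary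
    (fun _ => hper) (v := fun _ => Pi.single j 1) (fun _ => (Pi.norm_single _).trans_le norm_one.le)
    (c := lam j * δ / Γ) (div_pos (mul_pos (hlam j) hδ) hΓ0) ha hap fun q k hk => ?_
  rw [fderiv_dispersion_apply_single hω hlam0, abs_div, abs_mul, abs_of_pos (hlam j),
    abs_of_pos (hpos k)]
  exact div_le_div₀ (mul_nonneg (hlam0 j) (abs_nonneg _))
    (mul_le_mul_of_nonneg_left (hsupp q k hk) (hlam0 j)) (hpos k) (hle k)

lemma sqrt_one_sub_sq_le_abs_sin {x c : ℝ} (hx : |cos x| ≤ c) : √(1 - c ^ 2) ≤ |sin x| := by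
  rw [abs_sin_eq_sqrt_one_sub_cos_sq, ← sq_abs (cos x)]
  gcongr

lemma exists_norm_oscInt_dispersion_smul_le_of_le_abs_sin (hω : 0 < ω) (hlam : ∀ j, 0 < lam j)
    {w : (ι → ℝ) → ℝ} (hw : ContDiff ℝ (Fintype.card ι + 1 : ℕ) w) (hwp : TorusPeriodic w)
    (ha : CnBounded (Fintype.card ι + 1) a W) (hap : ∀ q, TorusPeriodic (a q)) {j : ι} {δ : ℝ}
    (hδ : 0 < δ) (hsupp : ∀ k, w k ≠ 0 → δ ≤ |sin (k j)|) :
    ∃ C > 0, ∀ q τ, 1 ≤ |τ| → ‖oscInt τ (dispersion ω lam) fun k => w k • a q k‖ ≤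
      C * (W q / |τ| ^ ((Fintype.card ι : ℝ) / 2 + 1)) := by
  have hwa : CnBounded (Fintype.card ι + 1) (fun q k => w k • a q k) W := by
    simpa only [one_mul] using! (CnBounded.of_periodic (P := P) hw hwp).smul ha
  obtain ⟨C, hC, hbound⟩ := exists_norm_oscInt_dispersion_le_of_le_abs_sin hω hlam hwa
    (fun q => hwp.comp₂ (hap q) (· • ·)) hδ fun q k hk => hsupp k (left_ne_zero_of_smul hk)
  refine ⟨C, hC, fun q τ hτ => (hbound q τ (abs_pos.1 (one_pos.trans_le hτ))).trans ?_⟩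
  have hW := ha.weight_nonneg q
  have hexp : (Fintype.card ι : ℝ) / 2 + 1 ≤ (Fintype.card ι + 1 : ℕ) := by
    push_cast
    linarith [(Fintype.card ι).cast_nonneg (α := ℝ)]
  rw [mul_assoc, ← div_eq_mul_inv, ← rpow_natCast]
  gcongr

lemma exists_norm_oscInt_dispersion_smul_le (hω : 0 < ω) (hlam : ∀ j, 0 < lam j) {c₀ δ c : ℝ}
    (hc₀ : 0 < c₀) (hδ : 0 < δ) (hc : 0 < c) (hsep : ∀ p : ι → ℝ, (∀ j, sin (p j) = 0) →
      SeparatesGradient (dispersion ω lam) (torusNhd p c₀) c) {σ : ι → SignType}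
    {w : (ι → ℝ) → ℝ} (hw : ContDiff ℝ (⊤ : ℕ∞) w) (hwp : TorusPeriodic w)
    (hsign : ∀ j, σ j ≠ 0 → ∀ k, w k ≠ 0 → c₀ < σ j * cos (k j))
    (hzero : ∀ j, σ j = 0 → ∀ k, w k ≠ 0 → δ ≤ |sin (k j)|)
    (ha : CnBounded (Fintype.card ι + 3) a W) (hap : ∀ q, TorusPeriodic (a q)) :
    ∃ C ≥ 0, ∀ q τ A, 1 ≤ |τ| → (∀ k, ‖a q k‖ ≤ A) →
      ‖oscInt τ (dispersion ω lam) fun k => w k • a q k‖ ≤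
        C * (A / |τ| ^ ((Fintype.card ι : ℝ) / 2) +
          W q / |τ| ^ ((Fintype.card ι : ℝ) / 2 + 1)) := by
  classical
  have hsmooth {m : ℕ} : (m : WithTop ℕ∞) ≤ ((⊤ : ℕ∞) : WithTop ℕ∞) := mod_cast le_top
  by_cases hσ : ∀ j, σ j ≠ 0
  · have hp (j : ι) : sin (criticalPoint σ j) = 0 := sin_criticalPoint (hσ j)
    obtain ⟨Φ⟩ := nonempty_gradientContraction_dispersion hω hlam hp hc₀
    obtain ⟨C, hC, hbound⟩ := Φ.exists_norm_oscInt_smul_le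
      (contDiff_dispersion hω fun j => (hlam j).le) (torusPeriodic_dispersion ω lam) hc
      (hsep _ hp) (isClosed_torusNhd _ _) (hw.of_le hsmooth) hwp
      (fun k hk => mem_torusNhd_criticalPoint hσ fun j => (hsign j (hσ j) k hk).le) ha hap
    refine ⟨C, hC, fun q τ A hτ hA =>
      (hbound q τ (abs_pos.1 (one_pos.trans_le hτ))).trans ?_⟩
    gcongr
    exact hA _
  · push Not at hσ
    obtain ⟨j, hj⟩ := hσ
    obtain ⟨C, hC, hbound⟩ := exists_norm_oscInt_dispersion_smul_le_of_le_abs_sin hω hlam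
      (hw.of_le hsmooth) hwp (ha.of_le (by lia)) hap hδ (hzero j hj)
    refine ⟨C, hC.le, fun q τ A hτ hA => (hbound q τ hτ).trans ?_⟩
    have hA0 : 0 ≤ A := (norm_nonneg _).trans (hA 0)
    gcongr
    exact le_add_of_nonneg_left (by positivity)

theorem exists_norm_oscInt_dispersion_le (hω : 0 < ω) (hlam : ∀ j, 0 < lam j)
    (ha : CnBounded (Fintype.card ι + 3) a W) (hap : ∀ q, TorusPeriodic (a q)) :
    ∃ C ≥ 0, ∀ q τ A, 1 ≤ |τ| → (∀ k, ‖a q k‖ ≤ A) →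
      ‖oscInt τ (dispersion ω lam) (a q)‖ ≤ C * (A / |τ| ^ ((Fintype.card ι : ℝ) / 2) +
        W q / |τ| ^ ((Fintype.card ι : ℝ) / 2 + 1)) := by
  classical
  have hlam0 (i : ι) : 0 ≤ lam i := (hlam i).le
  have hsmooth {n : WithTop ℕ∞} : ContDiff ℝ n (dispersion ω lam) := contDiff_dispersion hω hlam0
  obtain ⟨c₀, ⟨hc₀, hc₀1⟩, c, hc, hsep⟩ := exists_separatesGradient_dispersion hω hlam
  obtain ⟨c₁, hc₀₁, hc₁⟩ := exists_between hc₀1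
  obtain ⟨w, hw, hwp, hsum, hsign, hzero⟩ := exists_torus_partition (ι := ι) hc₀.le hc₀₁
  have hδ : 0 < √(1 - c₁ ^ 2) := sqrt_pos.2 (by nlinarith)
  have hpiece (σ : ι → SignType) := exists_norm_oscInt_dispersion_smul_le hω hlam hc₀ hδ hc hsep
    (hw σ) (hwp σ) (hsign σ) (fun j hj k hk => sqrt_one_sub_sq_le_abs_sin (hzero σ j hj k hk).le)
    ha hap
  choose C hC hbound using hpiece
  refine ⟨∑ σ, C σ, Finset.sum_nonneg fun σ _ => hC σ, fun q τ A hτ hA => ?_⟩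
  have hsplit : oscInt τ (dispersion ω lam) (a q) =
      ∑ σ, oscInt τ (dispersion ω lam) fun k => w σ k • a q k := by
    simp_rw [oscInt]
    rw [← integral_finsetSum]
    · simp_rw [← Finset.mul_sum, ← Finset.sum_smul, hsum, one_smul]
    · exact fun σ _ => integrableOn_torusCell (continuous_exp_phase_mul
        (hsmooth (n := 0)).continuous ((hw σ).continuous.smul (ha.1 q).continuous))
  rw [hsplit, Finset.sum_mul]
  exact norm_sum_le_of_le _ fun σ _ => hbound σ q τ A hτ hA

end Localization

section PartialDerivatives

variable {P ι A : Type*} [Fintype ι] [DecidableEq ι] [NormedAddCommGroup A] [NormedSpace ℝ A]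
  {m n : ℕ} {f : (ι → ℝ) → A}

/-- The `C^n` size `sup_{|β| ≤ n} ‖∂^β f‖_∞` of `f`. A multi-index of order `m` is encoded by a
list `v` of `m` coordinate directions. -/
noncomputable def partialDerivSup (n : ℕ) (f : (ι → ℝ) → A) : ℝ :=
  ⨆ m : Fin (n + 1), ⨆ v : Fin (m : ℕ) → ι, ⨆ k,
    ‖iteratedFDeriv ℝ (m : ℕ) f k fun i => Pi.single (v i) 1‖

lemma partialDerivSup_nonneg (n : ℕ) (f : (ι → ℝ) → A) : 0 ≤ partialDerivSup n f :=
  Real.iSup_nonneg fun _ => Real.iSup_nonneg fun _ => Real.iSup_nonneg fun _ => norm_nonneg _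

lemma norm_iteratedFDeriv_single_le_partialDerivSup (hf : ContDiff ℝ n f) (hper : TorusPeriodic f)
    (hm : m ≤ n) (v : Fin m → ι) (k : ι → ℝ) :
    ‖iteratedFDeriv ℝ m f k fun i => Pi.single (v i) 1‖ ≤ partialDerivSup n f := by
  let D (v : Fin m → ι) (k : ι → ℝ) : A := iteratedFDeriv ℝ m f k fun i => Pi.single (v i) 1
  have hbdd : BddAbove (Set.range fun k => ‖D v k‖) := by
    have hcont : Continuous (D v) :=
      (ContinuousMultilinearMap.apply ℝ _ A _).continuous.comp
        (hf.continuous_iteratedFDeriv (mod_cast hm))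
    obtain ⟨C, hC⟩ := ((hper.iteratedFDeriv m).comp_left fun M =>
      M fun i => Pi.single (v i) 1).exists_norm_le hcont
    exact ⟨C, by rintro - ⟨k, rfl⟩; exact hC k⟩
  calc ‖D v k‖ ≤ ⨆ k, ‖D v k‖ := le_ciSup hbdd k
    _ ≤ ⨆ v, ⨆ k, ‖D v k‖ := le_ciSup (f := fun v => ⨆ k, ‖D v k‖) (Set.finite_range _).bddAbove v
    _ ≤ partialDerivSup n f :=
        le_ciSup (f := fun m : Fin (n + 1) => ⨆ v : Fin (m : ℕ) → ι, ⨆ k,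
            ‖iteratedFDeriv ℝ (m : ℕ) f k fun i => Pi.single (v i) 1‖)
          (Set.finite_range _).bddAbove ⟨m, Nat.lt_succ_of_le hm⟩

lemma norm_le_card_pow_mul_of_norm_single_le
    {M : ContinuousMultilinearMap ℝ (fun _ : Fin m => ι → ℝ) A} {C : ℝ} (hC : 0 ≤ C)
    (hM : ∀ v : Fin m → ι, ‖M fun i => Pi.single (v i) 1‖ ≤ C) :
    ‖M‖ ≤ Fintype.card ι ^ m * C := by
  refine ContinuousMultilinearMap.opNorm_le_bound (by positivity) fun z => ?_
  have hexpand : M z = ∑ v : Fin m → ι, (∏ i, z i (v i)) • M fun i => Pi.single (v i) 1 := by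
    conv_lhs => rw [show z = fun i => ∑ j, z i j • Pi.single j 1 from
      funext fun i => pi_eq_sum_univ' (z i)]
    rw [M.map_sum]
    exact Finset.sum_congr rfl fun v _ => M.map_smul_univ _ _
  calc ‖M z‖ ≤ ∑ _ : Fin m → ι, (∏ i, ‖z i‖) * C := by
        rw [hexpand]
        refine norm_sum_le_of_le _ fun v _ => ?_
        rw [norm_smul, norm_prod]
        gcongr with i
        exacts [norm_le_pi_norm (z i) (v i), hM v]
    _ = Fintype.card ι ^ m * C * ∏ i, ‖z i‖ := by
        rw [Finset.sum_const, Finset.card_univ, Fintype.card_fun, Fintype.card_fin, nsmul_eq_mul]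
        push_cast
        ring

lemma CnBounded.of_periodic_partialDerivSup {f : P → (ι → ℝ) → A} (hf : ∀ p, ContDiff ℝ n (f p))
    (hper : ∀ p, TorusPeriodic (f p)) : CnBounded n f fun p => partialDerivSup n (f p) := by
  refine ⟨hf, (Fintype.card ι + 1) ^ n, by positivity, fun p m hm k => ?_⟩
  have hsup := partialDerivSup_nonneg n (f p)
  calc ‖_root_.iteratedFDeriv ℝ m (f p) k‖ ≤ Fintype.card ι ^ m * partialDerivSup n (f p) :=
        norm_le_card_pow_mul_of_norm_single_le hsup fun v =>
          norm_iteratedFDeriv_single_le_partialDerivSup (hf p) (hper p) hm v k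
    _ ≤ (Fintype.card ι + 1) ^ m * partialDerivSup n (f p) := by gcongr; simp
    _ ≤ (Fintype.card ι + 1) ^ n * partialDerivSup n (f p) := by gcongr; simp

end PartialDerivatives

section PlaneWave

variable {ι : Type*} [Fintype ι]

lemma torusPeriodic_exp_I_mul_sum (x : ι → ℤ) :
    TorusPeriodic fun k : ι → ℝ => Complex.exp (Complex.I * (∑ j, k j * x j : ℝ)) := by
  intro g hg k
  choose n hn using mem_torusLattice.1 hg
  have hphase : ((∑ j, (k + g) j * x j : ℝ) : ℂ) =
      (∑ j, k j * x j : ℝ) + (∑ j, n j * x j : ℤ) * (2 * π) := by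
    simp only [Pi.add_apply, hn, add_mul, Finset.sum_add_distrib]
    push_cast
    rw [Finset.sum_mul]
    congr 1
    exact Finset.sum_congr rfl fun j _ => by ring
  refine Complex.exp_eq_exp_iff_exists_int.2 ⟨∑ j, n j * x j, ?_⟩
  rw [hphase]
  ring

lemma iteratedDeriv_cexp_I_mul_ofReal (m : ℕ) :
    iteratedDeriv m (fun s : ℝ => Complex.exp (Complex.I * s)) =
      fun s : ℝ => Complex.I ^ m * Complex.exp (Complex.I * s) := by
  induction m with
  | zero => simp
  | succ m ih =>
    have hderiv (s : ℝ) : HasDerivAt (fun s : ℝ => Complex.exp (Complex.I * s))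
        (Complex.exp (Complex.I * s) * Complex.I) s := by
      simpa using (Complex.ofRealCLM.hasDerivAt.const_mul Complex.I).cexp
    rw [iteratedDeriv_succ, ih]
    ext s
    rw [((hderiv s).const_mul _).deriv]
    ring

lemma CnBounded.exp_I_mul_sum (n : ℕ) :
    CnBounded n (fun (x k : ι → ℝ) => Complex.exp (Complex.I * (∑ j, k j * x j : ℝ)))
      fun x => (1 + ∑ j, |x j|) ^ n := by
  have hwave : ContDiff ℝ n fun s : ℝ => Complex.exp (Complex.I * s) :=
    (contDiff_const.mul Complex.ofRealCLM.contDiff).cexp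
  let L (x : ι → ℝ) : (ι → ℝ) →L[ℝ] ℝ := ∑ j, x j • ContinuousLinearMap.proj j
  have hL : (fun x k : ι → ℝ => Complex.exp (Complex.I * (∑ j, k j * x j : ℝ))) =
      fun x => (fun s : ℝ => Complex.exp (Complex.I * s)) ∘ L x := by
    ext x k
    simp [L, mul_comm]
  have hL_norm (x : ι → ℝ) : ‖L x‖ ≤ ∑ j, |x j| := by
    refine norm_sum_le_of_le _ fun j _ => ?_
    rw [norm_smul, Real.norm_eq_abs]
    exact mul_le_of_le_one_right (abs_nonneg _)
      (ContinuousLinearMap.opNorm_le_bound _ zero_le_one fun k => by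
        simpa using norm_le_pi_norm k j)
  rw [hL]
  refine ⟨fun x => hwave.comp (L x).contDiff, 1, one_pos, fun x m hm k => ?_⟩
  rw [(L x).iteratedFDeriv_comp_right hwave k (mod_cast hm), one_mul]
  calc _ ≤ ‖_root_.iteratedFDeriv ℝ m (fun s : ℝ => Complex.exp (Complex.I * s)) (L x k)‖ *
          ∏ _ : Fin m, ‖L x‖ := ContinuousMultilinearMap.norm_compContinuousLinearMap_le _ _
    _ = ‖L x‖ ^ m := by
        simp [norm_iteratedFDeriv_eq_norm_iteratedDeriv, iteratedDeriv_cexp_I_mul_ofReal,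
          Complex.norm_exp]
    _ ≤ (1 + ∑ j, |x j|) ^ m := by
        gcongr
        exact (hL_norm x).trans (le_add_of_nonneg_left zero_le_one)
    _ ≤ (1 + ∑ j, |x j|) ^ n := by
        gcongr
        exact le_add_of_nonneg_right (by positivity)

end PlaneWave

theorem weighted_dispersive_estimate_general {ι : Type*} [Fintype ι] [DecidableEq ι] {ω : ℝ}
    (hω : 0 < ω) {lam : ι → ℝ} (hlam : ∀ j, 0 < lam j) :
    ∃ C ≥ 0, ∀ η : (ι → ℝ) → ℂ, ContDiff ℝ (Fintype.card ι + 3 : ℕ) η → TorusPeriodic η →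
      ∀ (t : ℝ) (x : ι → ℤ), 1 ≤ |t| →
        ‖∫ k in torusCell ι, Complex.exp (Complex.I *
            (((∑ j, k j * (x j : ℝ)) - 2 * t * dispersion ω lam k : ℝ) : ℂ)) * η k‖ ≤
          C * ((⨆ k, ‖η k‖) / |t| ^ ((Fintype.card ι : ℝ) / 2) +
            partialDerivSup (Fintype.card ι + 3) η * (1 + ∑ j, |(x j : ℝ)|) ^ (Fintype.card ι + 3) /
              |t| ^ ((Fintype.card ι : ℝ) / 2 + 1)) := by
  let N := Fintype.card ι + 3
  let Amplitude := {η : (ι → ℝ) → ℂ // ContDiff ℝ N η ∧ TorusPeriodic η}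
  have hη : CnBounded N (fun q : Amplitude × (ι → ℤ) => q.1.1) _ :=
    .of_periodic_partialDerivSup (fun q => q.1.2.1) fun q => q.1.2.2
  have hwave := (CnBounded.exp_I_mul_sum (ι := ι) N).reindex
    fun (q : Amplitude × (ι → ℤ)) j => (q.2 j : ℝ)
  obtain ⟨C, hC, hbound⟩ := exists_norm_oscInt_dispersion_le hω hlam (hwave.smul hη)
    fun q => (torusPeriodic_exp_I_mul_sum q.2).comp₂ q.1.2.2 _
  refine ⟨C, hC, fun η hηs hper t x ht => ?_⟩
  have hsup (k : ι → ℝ) : ‖η k‖ ≤ ⨆ k, ‖η k‖ := by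
    obtain ⟨B, hB⟩ := hper.exists_norm_le hηs.continuous
    exact le_ciSup (f := fun k => ‖η k‖) ⟨B, by rintro - ⟨k, rfl⟩; exact hB k⟩ k
  have htτ : |t| ≤ |-2 * t| := by
    rw [abs_mul, abs_neg, abs_two]
    linarith
  have hphase (k : ι → ℝ) : (∑ j, k j * (x j : ℝ)) - 2 * t * dispersion ω lam k =
      -2 * t * dispersion ω lam k + ∑ j, k j * (x j : ℝ) := by ring
  have hB := partialDerivSup_nonneg N η
  have hA := (norm_nonneg _).trans (hsup 0)
  calc _ = ‖oscInt (-2 * t) (dispersion ω lam)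
        fun k => Complex.exp (Complex.I * (∑ j, k j * (x j : ℝ) : ℝ)) • η k‖ := by
        simp only [oscInt, smul_eq_mul, hphase, Complex.ofReal_add, mul_add, Complex.exp_add,
          mul_assoc (Complex.exp _)]
    _ ≤ C * ((⨆ k, ‖η k‖) / |-2 * t| ^ ((Fintype.card ι : ℝ) / 2) +
          (1 + ∑ j, |(x j : ℝ)|) ^ N * partialDerivSup N η /
            |-2 * t| ^ ((Fintype.card ι : ℝ) / 2 + 1)) :=
        hbound (⟨η, hηs, hper⟩, x) _ _ (ht.trans htτ) fun k =>
          (norm_exp_I_mul_ofReal_mul _ _).trans_le (hsup k)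
    _ ≤ _ := by
        rw [mul_comm (_ ^ N)]
        gcongr

/-- Weighted dispersive estimate: with `γ(k) = sqrt(ω² + 4∑ⱼ λⱼ sin²(kⱼ/2))` and
phase `φ_{t,x}(k) = k·x − 2tγ(k)`, for every `C^{d+3}`, `2π`-periodic amplitude
`η` on the torus there is a constant `C`, independent of `t` and `x ∈ ℤ^d`, with
`|∫_{𝕋^d} e^{iφ_{t,x}} η| ≤ C (‖η‖_∞ |t|^{−d/2} + sup_{|β|≤d+3}‖∂^β η‖_∞ (3+‖x‖₁)^{d+3} |t|^{−(d+1)/2})`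
for all `|t| ≥ 1`. -/
theorem weighted_dispersive_estimate (d : ℕ) (ω : ℝ) (hω : 0 < ω)
    (lam : Fin d → ℝ) (hlam : ∀ j, 0 < lam j) (γ : (Fin d → ℝ) → ℝ)
    (hγ : ∀ k, γ k = Real.sqrt (ω ^ 2 + 4 * ∑ j, lam j * Real.sin (k j / 2) ^ 2))
    (η : (Fin d → ℝ) → ℂ) (hη : ContDiff ℝ (d + 3 : ℕ) η)
    (hper : ∀ (k : Fin d → ℝ) (j : Fin d), η (k + Pi.single j (2 * π)) = η k) :
    ∃ C : ℝ, ∀ (t : ℝ) (x : Fin d → ℤ), 1 ≤ |t| →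
      ‖∫ k in (Set.univ.pi fun _ : Fin d => Set.Ioc (-π) π),
          Complex.exp (Complex.I *
            (((∑ j, k j * (x j : ℝ)) - 2 * t * γ k : ℝ) : ℂ)) * η k‖ ≤
        C * ((⨆ k : Fin d → ℝ, ‖η k‖) / |t| ^ ((d : ℝ) / 2) +
          (⨆ n : Fin (d + 4), ⨆ m : Fin (n : ℕ) → Fin d, ⨆ k : Fin d → ℝ,
              ‖iteratedFDeriv ℝ (n : ℕ) η k (fun i => Pi.single (m i) 1)‖) *
            (3 + ∑ j, |(x j : ℝ)|) ^ (d + 3) / |t| ^ (((d : ℝ) + 1) / 2)) := by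
  have hγ' : γ = dispersion ω lam := funext hγ
  obtain ⟨C, hC, hbound⟩ := weighted_dispersive_estimate_general hω hlam
  refine ⟨C, fun t x ht => ?_⟩
  have hB := partialDerivSup_nonneg (d + 3) η
  rw [Fintype.card_fin] at hbound
  calc _ ≤ C * ((⨆ k, ‖η k‖) / |t| ^ ((d : ℝ) / 2) +
        partialDerivSup (d + 3) η * (1 + ∑ j, |(x j : ℝ)|) ^ (d + 3) /
          |t| ^ ((d : ℝ) / 2 + 1)) := hγ' ▸ hbound η hη (.of_single hper) t x ht
    _ ≤ C * ((⨆ k, ‖η k‖) / |t| ^ ((d : ℝ) / 2) +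
        partialDerivSup (d + 3) η * (3 + ∑ j, |(x j : ℝ)|) ^ (d + 3) /
          |t| ^ (((d : ℝ) + 1) / 2)) := by
        gcongr
        · norm_num
        · linarith
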